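/- arXiv:2411.05304 — 2 statements merged into one kernel-verified Lean document; each statement's English description precedes it below -/
import Mathlib

section
/- Let G* be a graph attaining the maximum spectral radius among all F-free graphs with m edges and no isolated vertices, where F is a 2-connected graph, and let u* be a vertex of G* with maximum Perron-vector entry. Then G* is connected, no vertex of V(G*) \ {u*} is a cut vertex of G*, and every vertex u ∉ N[u*] has degree at least 2. -/
open Matrix SimpleGraph

open Classical in
/-- The adjacency matrix of a simple graph over `ℝ`. -/
noncomputable def adjMat {V : Type} [Fintype V] (G : SimpleGraph V) : Matrix V V ℝ :=
  fun u v => if G.Adj u v then (1 : ℝ) else 0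

/-- `ρ` is the spectral radius (largest real eigenvalue) of the adjacency matrix of `G`. -/
def IsSpecRad {V : Type} [Fintype V] (G : SimpleGraph V) (ρ : ℝ) : Prop :=
  (∃ x : V → ℝ, x ≠ 0 ∧ adjMat G *ᵥ x = ρ • x) ∧
  ∀ μ : ℝ, (∃ x : V → ℝ, x ≠ 0 ∧ adjMat G *ᵥ x = μ • x) → μ ≤ ρ

/-- `G` contains a copy of `F` as a (not necessarily induced) subgraph. -/
def ContainsSub {α β : Type} (F : SimpleGraph α) (G : SimpleGraph β) : Prop :=
  ∃ f : F →g G, Function.Injective f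

/-- `F` is 2-connected: at least three vertices and deleting any single vertex leaves a
connected graph. -/
def TwoConnected {α : Type} [Fintype α] (F : SimpleGraph α) : Prop :=
  3 ≤ Fintype.card α ∧
  ∀ v : α, ((⊤ : F.Subgraph).deleteVerts {v}).coe.Connected


/-- The quadratic form of the adjacency matrix, as a double sum. -/
noncomputable def qf {V : Type} [Fintype V] (G : SimpleGraph V) (y : V → ℝ) : ℝ :=
  ∑ a, ∑ b, adjMat G a b * (y a * y b)

lemma adjMat_nonneg {V : Type} [Fintype V] (G : SimpleGraph V) (a b : V) : 0 ≤ adjMat G a b := by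
  unfold adjMat; split_ifs <;> norm_num

lemma adjMat_herm {V : Type} [Fintype V] (G : SimpleGraph V) : (adjMat G).IsHermitian := by
  ext a b
  by_cases h : G.Adj a b
  · simp [adjMat, h, h.symm]
  · simp only [adjMat, h, Matrix.conjTranspose_apply]
    simpa using fun h1 : G.Adj b a => h h1.symm

lemma dot_eq_qf {V : Type} [Fintype V] (G : SimpleGraph V) (y : V → ℝ) :
    y ⬝ᵥ (adjMat G *ᵥ y) = qf G y := by
  simp only [qf, dotProduct, mulVec, Finset.mul_sum]
  refine Finset.sum_congr rfl fun a _ => Finset.sum_congr rfl fun b _ => by ring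

open Classical in
lemma qf_one {V : Type} [Fintype V] (G : SimpleGraph V) :
    qf G (fun _ => 1) = 2 * (G.edgeSet.ncard : ℝ) := by
  have h := G.sum_degrees_eq_twice_card_edges
  have h2 : G.edgeSet.ncard = G.edgeFinset.card := by
    rw [← SimpleGraph.coe_edgeFinset, Set.ncard_coe_finset]
  rw [h2]
  have h3 : ((∑ v, G.degree v : ℕ) : ℝ) = 2 * (G.edgeFinset.card : ℝ) := by
    rw [h]; push_cast; rfl
  rw [← h3]
  push_cast
  unfold qf
  refine Finset.sum_congr rfl fun a _ => ?_
  simp only [adjMat, mul_one]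
  rw [Finset.sum_boole]
  congr 2
  ext b; simp

/-- Positive semidefiniteness of `ρ - A`. -/
lemma specRad_psd {V : Type} [Fintype V] [DecidableEq V] (G : SimpleGraph V) (ρ : ℝ)
    (hρ : ∀ μ : ℝ, (∃ x : V → ℝ, x ≠ 0 ∧ adjMat G *ᵥ x = μ • x) → μ ≤ ρ) :
    (ρ • (1 : Matrix V V ℝ) - adjMat G).PosSemidef := by
  have hH : (ρ • (1 : Matrix V V ℝ) - adjMat G).IsHermitian := by
    refine Matrix.IsHermitian.sub ?_ (adjMat_herm G)
    ext a b
    simp [Matrix.one_apply, eq_comm]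
  rw [hH.posSemidef_iff_eigenvalues_nonneg]
  intro i
  have h := hH.mulVec_eigenvectorBasis i
  set y : V → ℝ := ⇑(hH.eigenvectorBasis i) with hy
  have hy0 : y ≠ 0 := by
    intro h0
    have := hH.eigenvectorBasis.orthonormal.ne_zero i
    apply this
    ext j
    exact congrFun h0 j
  have := hρ (ρ - hH.eigenvalues i) ⟨y, hy0, by
    rw [Matrix.sub_mulVec, Matrix.smul_mulVec, Matrix.one_mulVec] at h
    rw [sub_smul, ← h]; simp⟩
  simp only [Pi.zero_apply]
  linarith

lemma qf_le {V : Type} [Fintype V] (G : SimpleGraph V) (ρ : ℝ)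
    (hρ : ∀ μ : ℝ, (∃ x : V → ℝ, x ≠ 0 ∧ adjMat G *ᵥ x = μ • x) → μ ≤ ρ) (y : V → ℝ) :
    qf G y ≤ ρ * (y ⬝ᵥ y) := by
  classical
  have h := (specRad_psd G ρ hρ).dotProduct_mulVec_nonneg y
  rw [Matrix.sub_mulVec, Matrix.smul_mulVec, Matrix.one_mulVec, dotProduct_sub] at h
  simp only [star_trivial, dotProduct_smul, smul_eq_mul, dot_eq_qf] at h
  linarith

lemma exists_specRad {V : Type} [Fintype V] [Nonempty V] (G : SimpleGraph V) :
    ∃ ρ, IsSpecRad G ρ := by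
  classical
  have hH := adjMat_herm G
  obtain ⟨i, hi⟩ := Finite.exists_max hH.eigenvalues
  refine ⟨hH.eigenvalues i, ⟨⇑(hH.eigenvectorBasis i), ?_, hH.mulVec_eigenvectorBasis i⟩, ?_⟩
  · intro h0
    have := hH.eigenvectorBasis.orthonormal.ne_zero i
    apply this
    ext j
    exact congrFun h0 j
  · rintro μ ⟨y, hy0, hy⟩
    have hs : μ ∈ spectrum ℝ (adjMat G) := by
      rw [← Matrix.spectrum_toLin']
      apply Module.End.HasEigenvalue.mem_spectrum
      exact Module.End.hasEigenvalue_of_hasEigenvector (x := y)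
        ⟨Module.End.mem_eigenspace_iff.2 (by simpa using hy), hy0⟩
    rw [hH.spectrum_real_eq_range_eigenvalues] at hs
    obtain ⟨j, rfl⟩ := hs
    exact hi j

/-- Restriction to non-isolated vertices. -/
lemma qf_support {V : Type} [Fintype V] (H : SimpleGraph V) (S : Set V) [Fintype S]
    (hS : ∀ a b, H.Adj a b → a ∈ S) (y : V → ℝ) :
    qf (H.induce S) (fun a => y a) = qf H y := by
  classical
  unfold qf
  have key : ∀ g : V → ℝ, (∀ a, a ∉ S → g a = 0) → ∑ a : S, g a = ∑ a, g a := by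
    intro g hg
    rw [← Finset.sum_subset (Finset.subset_univ S.toFinset) (f := g)
      (fun a _ ha => hg a (by simpa using ha))]
    exact (Finset.sum_subtype S.toFinset (by simp) g).symm
  rw [← key]
  · refine Finset.sum_congr rfl fun a _ => ?_
    rw [← key]
    · refine Finset.sum_congr rfl fun b _ => ?_
      simp [adjMat]
    · intro b hb
      have : ¬ H.Adj a b := fun h => hb (hS b a h.symm)
      simp [adjMat, this]
  · intro a ha
    refine Finset.sum_eq_zero fun b _ => ?_
    have : ¬ H.Adj a b := fun h => ha (hS a b h)
    simp [adjMat, this]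

lemma conn_prop {V : Type} {G : SimpleGraph V} {a b : V} (h : G.Reachable a b) (P : V → Prop)
    (hP : ∀ a b, G.Adj a b → P a → P b) (ha : P a) : P b := by
  obtain ⟨w⟩ := h
  induction w with
  | nil => exact ha
  | cons hadj _ ih => exact ih (hP _ _ hadj ha)

/-- The moved graph. -/
def moved {V : Type} (G : SimpleGraph V) (u v : V) (C : Set V) (hu : u ∉ C) : SimpleGraph V where
  Adj a b := (G.Adj a b ∧ ¬ (a = v ∧ b ∈ C) ∧ ¬ (b = v ∧ a ∈ C)) ∨
    (a = u ∧ b ∈ C ∧ G.Adj v b) ∨ (b = u ∧ a ∈ C ∧ G.Adj v a)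
  symm := ⟨by
    rintro a b (⟨h, h1, h2⟩ | h | h)
    · exact Or.inl ⟨h.symm, h2, h1⟩
    · exact Or.inr (Or.inr h)
    · exact Or.inr (Or.inl h)⟩
  loopless := ⟨by
    rintro a (⟨h, _⟩ | ⟨h, h1, _⟩ | ⟨h, h1, _⟩)
    · exact G.loopless.irrefl a h
    · exact hu (h ▸ h1)
    · exact hu (h ▸ h1)⟩

lemma moved_free {α V : Type} [Fintype α] (F : SimpleGraph α) (hF : TwoConnected F)
    (G : SimpleGraph V) (hfree : ¬ ContainsSub F G) (u v : V) (C : Set V) (hu : u ∉ C)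
    (hv : v ∉ C) (hC : ∀ a b, G.Adj a b → a ∈ C → b ∈ C ∨ b = v) :
    ¬ ContainsSub F (moved G u v C hu) := by
  classical
  rintro ⟨f, hf⟩
  apply hfree
  -- `C` is constant on `F - a` when `u` is not hit there
  have hcl : ∀ a b, (moved G u v C hu).Adj a b → a ∈ C → b ≠ u → b ∈ C := by
    rintro a b (⟨h, h1, h2⟩ | h | h) ha hb
    · rcases hC a b h ha with h3 | h3
      · exact h3
      · exact absurd ⟨h3, ha⟩ h2
    · exact h.2.1
    · exact absurd h.1 hb
  have hconst : ∀ a : α, (∀ c, c ≠ a → f c ≠ u) → ∀ c d, c ≠ a → d ≠ a → f c ∈ C → f d ∈ C := by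
    intro a ha c d hc hd hcC
    have hcon := hF.2 a
    have hr := hcon.preconnected ⟨c, by simpa using hc⟩ ⟨d, by simpa using hd⟩
    refine conn_prop hr (fun t => f t.1 ∈ C) ?_ hcC
    rintro ⟨s, hs⟩ ⟨t, ht⟩ hst hsC
    have hadj : F.Adj s t := Subgraph.coe_adj_sub _ _ _ hst
    refine hcl _ _ (f.map_adj hadj) hsC (ha t ?_)
    simpa using ht
  have hdich : (∀ c, f c ∉ C) ∨ (∀ c, f c ∈ C ∨ f c = u) := by
    by_cases hr : ∃ a, f a = u
    · obtain ⟨a, ha⟩ := hr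
      have h1 : ∀ c, c ≠ a → f c ≠ u := fun c hc h => hc (hf (h.trans ha.symm))
      by_cases h2 : ∃ c, f c ∈ C
      · obtain ⟨c, hc⟩ := h2
        right
        intro d
        by_cases hd : d = a
        · right; rw [hd, ha]
        · left
          refine hconst a h1 c d ?_ hd hc
          rintro rfl
          exact hu (ha ▸ hc)
      · left; push Not at h2; exact h2
    · push Not at hr
      by_cases h2 : ∃ c, f c ∈ C
      · obtain ⟨c, hc⟩ := h2
        right
        intro d
        left
        have : ∃ a, a ∉ ({c, d} : Finset α) := by
          by_contra! hall
          have h3 : (Finset.univ : Finset α) ⊆ {c, d} := fun t _ => hall t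
          have h4 := Finset.card_le_card h3
          have h5 := Finset.card_le_two (a := c) (b := d)
          have h6 := hF.1
          rw [Finset.card_univ] at h4
          omega
        obtain ⟨a, ha⟩ := this
        simp only [Finset.mem_insert, Finset.mem_singleton, not_or] at ha
        exact hconst a (fun c _ => hr c) c d (Ne.symm ha.1) (Ne.symm ha.2) hc
      · left; push Not at h2; exact h2
  rcases hdich with h | h
  · refine ⟨⟨f, ?_⟩, hf⟩
    intro a b hab
    rcases f.map_adj hab with h1 | h1 | h1
    · exact h1.1
    · exact absurd h1.2.1 (h b)
    · exact absurd h1.2.1 (h a)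
  · refine ⟨⟨fun c => if f c ∈ C then f c else v, ?_⟩, ?_⟩
    · intro a b hab
      have hne : f a ≠ f b := fun h => F.ne_of_adj hab (hf h)
      have h1 := f.map_adj hab
      by_cases ha : f a ∈ C <;> by_cases hb : f b ∈ C <;> simp only [ha, hb, if_true, if_false]
      · rcases h1 with h1 | h1 | h1
        · exact h1.1
        · exact absurd (h1.1 ▸ ha) hu
        · exact absurd (h1.1 ▸ hb) hu
      · have hbu := (h b).resolve_left hb
        rcases h1 with h1 | h1 | h1
        · rcases hC _ _ h1.1 ha with h3 | h3
          · exact absurd h3 hb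
          · exact absurd ⟨h3, ha⟩ h1.2.2
        · exact absurd (h1.1 ▸ ha) hu
        · exact h1.2.2.symm
      · have hau := (h a).resolve_left ha
        rcases h1 with h1 | h1 | h1
        · rcases hC _ _ h1.1.symm hb with h3 | h3
          · exact absurd h3 ha
          · exact absurd ⟨h3, hb⟩ h1.2.1
        · exact h1.2.2
        · exact absurd (h1.1 ▸ hb) hu
      · exact absurd (((h a).resolve_left ha).trans ((h b).resolve_left hb).symm) hne
    · intro a b hab
      simp only [RelHom.coeFn_mk] at hab
      by_cases ha : f a ∈ C <;> by_cases hb : f b ∈ C <;>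
        simp only [ha, hb, if_true, if_false] at hab
      · exact hf hab
      · exact absurd (hab ▸ ha) hv
      · exact absurd (hab ▸ hb) hv
      · exact hf (((h a).resolve_left ha).trans ((h b).resolve_left hb).symm)

open Classical in
lemma moved_adjMat {V : Type} [Fintype V] (G : SimpleGraph V) (u v : V) (C : Set V) (hu : u ∉ C)
    (hv : v ∉ C) (huv : v ≠ u) (hC : ∀ a b, G.Adj a b → a ∈ C → b ∈ C ∨ b = v) (a b : V) :
    adjMat (moved G u v C hu) a b = adjMat G a b +
      ((if a = u then 1 else 0) - (if a = v then 1 else 0)) *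
        (if b ∈ C ∧ G.Adj v b then 1 else 0) +
      (if a ∈ C ∧ G.Adj v a then 1 else 0) *
        ((if b = u then 1 else 0) - (if b = v then 1 else 0)) := by
  have hCu : ∀ b, b ∈ C → ¬ G.Adj u b := by
    intro b hb h
    rcases hC b u h.symm hb with h | h
    · exact hu h
    · exact huv h.symm
  have hCu' : ∀ b, b ∈ C → ¬ G.Adj b u := fun b hb h => hCu b hb h.symm
  simp only [adjMat, moved]
  have hs : ∀ b, G.Adj b v ↔ G.Adj v b := fun b => G.adj_comm b v
  by_cases hau : a = u
  · subst hau
    by_cases hb : b ∈ C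
    · have h1 : b ≠ a := fun h => hu (h ▸ hb)
      have h2 : b ≠ v := fun h => hv (h ▸ hb)
      simp [hb, hu, huv.symm, h1, h2, hCu b hb]
    · simp [hb, hu, huv.symm]
  · by_cases hav : a = v
    · subst hav
      by_cases hb : b ∈ C
      · have h1 : b ≠ u := fun h => hu (h ▸ hb)
        have h2 : b ≠ a := fun h => hv (h ▸ hb)
        by_cases hadj : G.Adj a b <;> simp [hb, hv, huv, hadj]
      · simp [hb, hv, huv]
    · by_cases ha : a ∈ C
      · by_cases hbu : b = u
        · subst hbu
          simp [ha, hu, hau, hav, hCu' a ha, huv.symm]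
        · by_cases hbv : b = v
          · subst hbv
            by_cases hadj : G.Adj b a <;> simp [ha, hv, hau, hav, huv, hadj, hs]
          · simp [ha, hau, hav, hbu, hbv]
      · simp [ha, hau, hav]

open Classical in
lemma moved_mulVec {V : Type} [Fintype V] (G : SimpleGraph V) (u v : V) (C : Set V) (hu : u ∉ C)
    (hv : v ∉ C) (huv : v ≠ u) (hC : ∀ a b, G.Adj a b → a ∈ C → b ∈ C ∨ b = v) (y : V → ℝ) (a : V) :
    (adjMat (moved G u v C hu) *ᵥ y) a = (adjMat G *ᵥ y) a +
      ((if a = u then 1 else 0) - (if a = v then 1 else 0)) *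
        (∑ b, (if b ∈ C ∧ G.Adj v b then 1 else 0) * y b) +
      (if a ∈ C ∧ G.Adj v a then 1 else 0) * (y u - y v) := by
  simp only [mulVec, dotProduct]
  simp_rw [moved_adjMat G u v C hu hv huv hC, add_mul, Finset.sum_add_distrib, mul_assoc,
    ← Finset.mul_sum, sub_mul, Finset.sum_sub_distrib]
  simp

open Classical in
lemma moved_qf {V : Type} [Fintype V] (G : SimpleGraph V) (u v : V) (C : Set V) (hu : u ∉ C)
    (hv : v ∉ C) (huv : v ≠ u) (hC : ∀ a b, G.Adj a b → a ∈ C → b ∈ C ∨ b = v) (y : V → ℝ) :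
    qf (moved G u v C hu) y = qf G y +
      2 * (y u - y v) * (∑ b, (if b ∈ C ∧ G.Adj v b then 1 else 0) * y b) := by
  rw [← dot_eq_qf, ← dot_eq_qf]
  simp only [dotProduct]
  simp_rw [moved_mulVec G u v C hu hv huv hC, mul_add, Finset.sum_add_distrib]
  set K := ∑ b, (if b ∈ C ∧ G.Adj v b then (1:ℝ) else 0) * y b with hK
  have h1 : ∑ a, y a * (((if a = u then (1:ℝ) else 0) - (if a = v then 1 else 0)) * K)
      = (y u - y v) * K := by
    simp_rw [← mul_assoc, ← Finset.sum_mul, mul_sub, Finset.sum_sub_distrib]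
    simp
  have h2 : ∑ a, y a * ((if a ∈ C ∧ G.Adj v a then (1:ℝ) else 0) * (y u - y v))
      = (y u - y v) * K := by
    rw [hK, Finset.mul_sum]
    exact Finset.sum_congr rfl fun a _ => by ring
  rw [h1, h2]; ring

lemma no_move {α V : Type} [Fintype α] [Fintype V]
    (F : SimpleGraph α) (hF : TwoConnected F) (m : ℕ)
    (G : SimpleGraph V) (hfree : ¬ ContainsSub F G) (hm : G.edgeSet.ncard = m)
    (ρ : ℝ)
    (hmax : ∀ (W : Type) [Fintype W] (H : SimpleGraph W), ¬ ContainsSub F H →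
      H.edgeSet.ncard = m → (∀ w : W, (H.neighborSet w).ncard ≠ 0) →
      ∀ ρ' : ℝ, IsSpecRad H ρ' → ρ' ≤ ρ)
    (x : V → ℝ) (hx0 : x ≠ 0) (hxnn : ∀ v, 0 ≤ x v) (hxe : adjMat G *ᵥ x = ρ • x)
    (u : V) (hustar : ∀ v, x v ≤ x u) (v : V) (huv : v ≠ u) (C : Set V) (hu : u ∉ C)
    (hv : v ∉ C) (hC : ∀ a b, G.Adj a b → a ∈ C → b ∈ C ∨ b = v)
    (w : V) (hw : w ∈ C) (hvw : G.Adj v w) : False := by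
  classical
  have hxu : 0 < x u := by
    rcases (hxnn u).lt_or_eq with h | h
    · exact h
    · exact absurd (funext fun t => le_antisymm ((hustar t).trans h.symm.le) (hxnn t)) hx0
  have hρ0 : 0 ≤ ρ := by
    have h1 := congrFun hxe u
    have h2 : 0 ≤ (adjMat G *ᵥ x) u :=
      Finset.sum_nonneg fun b _ => mul_nonneg (adjMat_nonneg G u b) (hxnn b)
    rw [h1, Pi.smul_apply, smul_eq_mul] at h2
    exact nonneg_of_mul_nonneg_left h2 hxu
  set H := moved G u v C hu with hH
  have hHfree : ¬ ContainsSub F H := moved_free F hF G hfree u v C hu hv hC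
  let S : Set V := {a | ∃ b, H.Adj a b}
  have hS : ∀ a b, H.Adj a b → a ∈ S := fun a b h => ⟨b, h⟩
  let H' := H.induce S
  have hH'free : ¬ ContainsSub F H' := by
    rintro ⟨f, hf⟩
    exact hHfree ⟨(SimpleGraph.Embedding.induce S).toHom.comp f,
      Subtype.val_injective.comp hf⟩
  have hq := moved_qf G u v C hu hv huv hC
  have hH'm : H'.edgeSet.ncard = m := by
    have h1 := qf_one H'
    have h2 := qf_support H S hS (fun _ => 1)
    have h3 := hq (fun _ => 1)
    have h4 := qf_one G
    rw [← hH] at h3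
    have h5 : (H'.edgeSet.ncard : ℝ) = (G.edgeSet.ncard : ℝ) := by
      simp only [sub_self, mul_zero, zero_mul, add_zero] at h3
      have h6 : qf H' (fun _ => 1) = qf H (fun _ => 1) := h2
      linarith
    rw [← hm]
    exact_mod_cast h5
  have hwu : H.Adj u w := Or.inr (Or.inl ⟨rfl, hw, hvw⟩)
  have hH'iso : ∀ w : S, (H'.neighborSet w).ncard ≠ 0 := by
    rintro ⟨a, b, hab⟩
    have hb : b ∈ S := ⟨a, hab.symm⟩
    refine Set.ncard_ne_zero_of_mem (a := (⟨b, hb⟩ : S)) ?_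
    exact hab
  have : Nonempty S := ⟨⟨u, w, hwu⟩⟩
  obtain ⟨ρ', hρ'⟩ := exists_specRad H'
  have hle : ρ' ≤ ρ := hmax S H' hH'free hH'm hH'iso ρ' hρ'
  have hHle : ∀ μ : ℝ, (∃ y : V → ℝ, y ≠ 0 ∧ adjMat H *ᵥ y = μ • y) → μ ≤ ρ := by
    rintro μ ⟨y, hy0, hy⟩
    have h1 : qf H y = μ * (y ⬝ᵥ y) := by
      rw [← dot_eq_qf, hy, dotProduct_smul, smul_eq_mul]
    have h2 : qf H' (fun a => y a) = qf H y := qf_support H S hS y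
    have h3 := qf_le H' ρ' hρ'.2 (fun a => y a)
    have h4 : (fun a : S => y a) ⬝ᵥ (fun a : S => y a) ≤ y ⬝ᵥ y := by
      simp only [dotProduct]
      rw [← Finset.sum_subtype S.toFinset (by simp) (fun a => y a * y a)]
      exact Finset.sum_le_sum_of_subset_of_nonneg (Finset.subset_univ _)
        fun i _ _ => mul_self_nonneg _
    have h5 : 0 ≤ (fun a : S => y a) ⬝ᵥ (fun a : S => y a) :=
      Finset.sum_nonneg fun i _ => mul_self_nonneg _
    have h6 : 0 < y ⬝ᵥ y := by
      refine lt_of_le_of_ne (Finset.sum_nonneg fun i _ => mul_self_nonneg _) ?_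
      intro h
      exact hy0 (dotProduct_self_eq_zero.1 h.symm)
    have h7 : μ * (y ⬝ᵥ y) ≤ ρ * (y ⬝ᵥ y) := by
      calc μ * (y ⬝ᵥ y) ≤ ρ' * ((fun a : S => y a) ⬝ᵥ (fun a : S => y a)) := by
            rw [← h1, ← h2]; exact h3
        _ ≤ ρ * ((fun a : S => y a) ⬝ᵥ (fun a : S => y a)) := mul_le_mul_of_nonneg_right hle h5
        _ ≤ _ := mul_le_mul_of_nonneg_left h4 hρ0
    exact le_of_mul_le_mul_right h7 h6
  have hpsd := specRad_psd H ρ hHle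
  set K := ∑ b, (if b ∈ C ∧ G.Adj v b then (1:ℝ) else 0) * x b with hK
  have hterm : ∀ b, 0 ≤ (if b ∈ C ∧ G.Adj v b then (1:ℝ) else 0) * x b := fun b =>
    mul_nonneg (by split_ifs <;> norm_num) (hxnn b)
  have hK0 : 0 ≤ K := Finset.sum_nonneg fun b _ => hterm b
  have hqx : qf H x = ρ * (x ⬝ᵥ x) := by
    refine le_antisymm (qf_le H ρ hHle x) ?_
    have h1 : qf G x = ρ * (x ⬝ᵥ x) := by
      rw [← dot_eq_qf, hxe, dotProduct_smul, smul_eq_mul]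
    rw [hH, hq x, h1]
    have := mul_nonneg (mul_nonneg (by norm_num : (0:ℝ) ≤ 2) (sub_nonneg.2 (hustar v))) hK0
    linarith
  have hzero : (ρ • (1 : Matrix V V ℝ) - adjMat H) *ᵥ x = 0 := by
    rw [← hpsd.dotProduct_mulVec_zero_iff]
    rw [Matrix.sub_mulVec, Matrix.smul_mulVec, Matrix.one_mulVec, dotProduct_sub]
    simp only [star_trivial, dotProduct_smul, smul_eq_mul, dot_eq_qf]
    linarith
  have heig : adjMat H *ᵥ x = adjMat G *ᵥ x := by
    rw [Matrix.sub_mulVec, Matrix.smul_mulVec, Matrix.one_mulVec] at hzero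
    rw [hxe]; exact (sub_eq_zero.1 hzero).symm
  have hmv := moved_mulVec G u v C hu hv huv hC x
  rw [← hH, heig] at hmv
  have e1 := hmv u
  have e2 := hmv w
  have hwu' : w ≠ u := fun h => hu (h ▸ hw)
  have hwv' : w ≠ v := fun h => hv (h ▸ hw)
  rw [← hK] at e1 e2
  simp [hu, huv.symm] at e1
  simp [hw, hvw, hwu', hwv'] at e2
  have hxw : x w = 0 := by
    have h := (Finset.sum_eq_zero_iff_of_nonneg (fun b _ => hterm b)).1 (hK.symm.trans e1) w
      (Finset.mem_univ w)
    simpa [hw, hvw] using h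
  have h1 := congrFun hxe w
  rw [Pi.smul_apply, hxw, smul_zero] at h1
  have h2 := (Finset.sum_eq_zero_iff_of_nonneg
    (fun b _ => mul_nonneg (adjMat_nonneg G w b) (hxnn b))).1 h1 v (Finset.mem_univ v)
  simp [adjMat, hvw.symm] at h2
  linarith

/-- if `G` maximizes the spectral radius among `F`-free graphs with `m`
edges and no isolated vertices (`F` 2-connected), and `u*` has maximal Perron entry,
then `G` is connected, no vertex other than `u*` is a cut vertex, and every vertex
outside `N[u*]` has degree at least 2. -/
theorem extremal_graph_structure {α V : Type} [Fintype α] [Fintype V]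
    (F : SimpleGraph α) (hF : TwoConnected F) (m : ℕ)
    (G : SimpleGraph V) (hfree : ¬ ContainsSub F G) (hm : G.edgeSet.ncard = m)
    (hiso : ∀ v : V, (G.neighborSet v).ncard ≠ 0)
    (ρ : ℝ) (hρ : IsSpecRad G ρ)
    (hmax : ∀ (W : Type) [Fintype W] (H : SimpleGraph W), ¬ ContainsSub F H →
      H.edgeSet.ncard = m → (∀ w : W, (H.neighborSet w).ncard ≠ 0) →
      ∀ ρ' : ℝ, IsSpecRad H ρ' → ρ' ≤ ρ)
    (x : V → ℝ) (hx0 : x ≠ 0) (hxnn : ∀ v, 0 ≤ x v) (hxe : adjMat G *ᵥ x = ρ • x)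
    (ustar : V) (hustar : ∀ v, x v ≤ x ustar) :
    G.Connected ∧
    (∀ v : V, v ≠ ustar → ((⊤ : G.Subgraph).deleteVerts {v}).coe.Connected) ∧
    (∀ u : V, u ∉ G.neighborSet ustar → u ≠ ustar → 2 ≤ (G.neighborSet u).ncard) := by
  classical
  have hnm := no_move F hF m G hfree hm ρ hmax x hx0 hxnn hxe ustar hustar
  have hconn : G.Connected := by
    by_contra hnot
    have h1 : ∃ v, ¬ G.Reachable ustar v := by
      by_contra! hall
      exact hnot ((SimpleGraph.connected_iff_exists_forall_reachable G).2 ⟨ustar, hall⟩)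
    obtain ⟨v, hv⟩ := h1
    have hvu : v ≠ ustar := by
      rintro rfl
      exact hv (SimpleGraph.Reachable.refl _)
    obtain ⟨w, hw⟩ := Set.nonempty_of_ncard_ne_zero (hiso v)
    have hvw : G.Adj v w := hw
    refine hnm v hvu {a | ¬ G.Reachable ustar a ∧ a ≠ v} ?_ ?_ ?_ w ?_ hvw
    · exact fun h => h.1 (SimpleGraph.Reachable.refl _)
    · exact fun h => h.2 rfl
    · rintro a b hab ⟨ha, _⟩
      by_cases hb : b = v
      · exact Or.inr hb
      · exact Or.inl ⟨fun h => ha (h.trans hab.symm.reachable), hb⟩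
    · exact ⟨fun h => hv (h.trans hvw.symm.reachable), hvw.ne'⟩
  have hcut : ∀ v : V, v ≠ ustar → ((⊤ : G.Subgraph).deleteVerts {v}).coe.Connected := by
    intro v hvu
    by_contra hnot
    set D := ((⊤ : G.Subgraph).deleteVerts {v}) with hD
    have hmem : ∀ a, a ≠ v → a ∈ D.verts := by
      intro a ha
      simp [hD, ha]
    have hadj : ∀ (a b : V) (ha : a ≠ v) (hb : b ≠ v), G.Adj a b →
        D.coe.Adj ⟨a, hmem a ha⟩ ⟨b, hmem b hb⟩ := by
      intro a b ha hb h
      simp [hD, ha, hb, h]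
    have h1 : ∃ t, ¬ D.coe.Reachable ⟨ustar, hmem _ hvu.symm⟩ t := by
      by_contra! hall
      exact hnot ((SimpleGraph.connected_iff_exists_forall_reachable _).2 ⟨_, hall⟩)
    obtain ⟨⟨t, ht⟩, htr⟩ := h1
    have htv : t ≠ v := by
      rintro rfl
      simp [hD] at ht
    let C : Set V := {a | ∃ h : a ≠ v, ¬ D.coe.Reachable ⟨ustar, hmem _ hvu.symm⟩ ⟨a, hmem a h⟩}
    have hu : ustar ∉ C := fun ⟨_, h⟩ => h (SimpleGraph.Reachable.refl _)
    have hv : v ∉ C := fun ⟨h, _⟩ => h rfl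
    have hC : ∀ a b, G.Adj a b → a ∈ C → b ∈ C ∨ b = v := by
      rintro a b hab ⟨ha, har⟩
      by_cases hb : b = v
      · exact Or.inr hb
      · exact Or.inl ⟨hb, fun h => har (h.trans (hadj a b ha hb hab).symm.reachable)⟩
    have htC : t ∈ C := ⟨htv, htr⟩
    by_cases hw : ∃ w ∈ C, G.Adj v w
    · obtain ⟨w, hwC, hvw⟩ := hw
      exact hnm v hvu C hu hv hC w hwC hvw
    · push Not at hw
      refine hu (conn_prop (hconn.preconnected t ustar) (fun a => a ∈ C) ?_ htC)
      intro a b hab ha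
      rcases hC a b hab ha with h | h
      · exact h
      · exact absurd (h ▸ hab.symm) (hw a ha)
  refine ⟨hconn, hcut, ?_⟩
  intro u hu huu
  by_contra hlt
  have h1 : (G.neighborSet u).ncard = 1 := by
    have := hiso u
    omega
  obtain ⟨w, hw⟩ := Set.ncard_eq_one.1 h1
  have huw : G.Adj u w := by
    have : w ∈ G.neighborSet u := by rw [hw]; rfl
    exact this
  have hwu : w ≠ ustar := by
    rintro rfl
    exact hu huw.symm
  have hc := hcut w hwu
  have hr := hc.preconnected ⟨u, by simpa using huw.ne⟩ ⟨ustar, by simpa using hwu.symm⟩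
  refine huu (conn_prop hr (fun a => a.1 = u) ?_ rfl).symm
  rintro ⟨a, ha⟩ ⟨b, hb⟩ hab hau
  have hau' : a = u := hau
  have hab' : G.Adj a b := Subgraph.coe_adj_sub _ _ _ hab
  subst hau'
  have hbw : b ∈ G.neighborSet a := hab'
  rw [hw] at hbw
  have hbw' : b = w := hbw
  exact absurd hbw' (by simpa using hb)
end

section
/- Let m ≥ 92 be an even integer. If G is a θ(1,3,3)-free graph with m edges and no isolated vertices, then ρ(G) ≤ ρ(S^-_{(m+4)/2,2}), with equality if and only if G is isomorphic to S^-_{(m+4)/2,2}. -/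
open Matrix SimpleGraph

/-- The theta graph `θ(1,3,3)`: vertices `0` and `1` joined by the edge `01` and the two
paths `0-2-3-1` and `0-4-5-1` of length three. -/
def theta133 : SimpleGraph (Fin 6) :=
  SimpleGraph.fromEdgeSet {s(0,1), s(0,2), s(2,3), s(3,1), s(0,4), s(4,5), s(5,1)}

/-- The graph `S⁻_{t+2,2}`: the join of `K_2` (the two `inl` vertices) with `t` independent
vertices, with the single edge from `inl 0` to `inr 0` deleted. It has `2t` edges.
For even `m`, `SminusG (m/2)` is the graph `S⁻_{(m+4)/2, 2}` of the paper. -/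
def SminusG (t : ℕ) : SimpleGraph (Fin 2 ⊕ Fin t) :=
  SimpleGraph.fromRel (fun x y =>
    match x, y with
    | Sum.inl _, Sum.inl _ => True
    | Sum.inl a, Sum.inr c => ¬(a = 0 ∧ (c : ℕ) = 0)
    | _, _ => False)


lemma theta_of {V : Type} (G : SimpleGraph V) (hfree : ¬ ContainsSub theta133 G)
    (a b c d e f : V) (h01 : G.Adj a b) (h02 : G.Adj a c) (h23 : G.Adj c d) (h31 : G.Adj d b)
    (h04 : G.Adj a e) (h45 : G.Adj e f) (h51 : G.Adj f b)
    (had : a ≠ d) (haf : a ≠ f) (hbc : b ≠ c) (hbe : b ≠ e) (hce : c ≠ e) (hcf : c ≠ f)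
    (hde : d ≠ e) (hdf : d ≠ f) : False := by
  apply hfree
  refine ⟨⟨![a, b, c, d, e, f], ?_⟩, ?_⟩
  · intro i j hij
    simp only [theta133, SimpleGraph.fromEdgeSet_adj, Set.mem_insert_iff,
      Set.mem_singleton_iff] at hij
    have := h01.symm
    have := h02.symm
    have := h23.symm
    have := h31.symm
    have := h04.symm
    have := h45.symm
    have := h51.symm
    fin_cases i <;> fin_cases j <;> first | assumption | (exfalso; revert hij; decide)
  · have := h01.ne
    have := h02.ne
    have := h23.ne
    have := h31.ne
    have := h04.ne
    have := h45.ne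
    have := h51.ne
    intro i j hij
    change (![a, b, c, d, e, f] : Fin 6 → V) i = (![a, b, c, d, e, f] : Fin 6 → V) j at hij
    fin_cases i <;> fin_cases j <;> first | rfl | (exfalso; simp at hij; simp_all)

lemma adjMat_posSemidef {V : Type} [Fintype V] (G : SimpleGraph V) (ρ : ℝ)
    (h : ∀ μ : ℝ, (∃ x : V → ℝ, x ≠ 0 ∧ adjMat G *ᵥ x = μ • x) → μ ≤ ρ) (y : V → ℝ) :
    y ⬝ᵥ (adjMat G *ᵥ y) ≤ ρ * (y ⬝ᵥ y) ∧
    (y ⬝ᵥ (adjMat G *ᵥ y) = ρ * (y ⬝ᵥ y) → adjMat G *ᵥ y = ρ • y) := by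
  classical
  have hA : (adjMat G).IsHermitian := by
    ext i j
    simp [adjMat, Matrix.conjTranspose_apply, G.adj_comm]
  have hB : (ρ • (1 : Matrix V V ℝ) - adjMat G).IsHermitian := by
    apply Matrix.IsHermitian.sub _ hA
    ext i j
    simp [Matrix.conjTranspose_apply, Matrix.one_apply, eq_comm]
  have hps : (ρ • (1 : Matrix V V ℝ) - adjMat G).PosSemidef := by
    rw [hB.posSemidef_iff_eigenvalues_nonneg]
    intro i
    have h1 := hB.mulVec_eigenvectorBasis i
    set z : V → ℝ := (hB.eigenvectorBasis i).ofLp with hz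
    have hz0 : z ≠ 0 := by
      intro h0
      have h2 := hB.eigenvectorBasis.orthonormal.ne_zero i
      apply h2
      ext j
      exact congrFun h0 j
    have h3 := h (ρ - hB.eigenvalues i) ⟨z, hz0, by
      rw [Matrix.sub_mulVec, Matrix.smul_mulVec, Matrix.one_mulVec] at h1
      rw [sub_smul, ← h1]; abel⟩
    simp only [Pi.zero_apply]
    linarith
  have key : y ⬝ᵥ ((ρ • (1 : Matrix V V ℝ) - adjMat G) *ᵥ y)
      = ρ * (y ⬝ᵥ y) - y ⬝ᵥ (adjMat G *ᵥ y) := by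
    rw [Matrix.sub_mulVec, Matrix.smul_mulVec, Matrix.one_mulVec, dotProduct_sub,
      dotProduct_smul, smul_eq_mul]
  have h2 := hps.dotProduct_mulVec_nonneg y
  have h3 := hps.dotProduct_mulVec_zero_iff y
  simp only [star_trivial] at h2 h3
  rw [key] at h2 h3
  refine ⟨by linarith, fun he => ?_⟩
  have h4 := h3.1 (by linarith)
  rw [Matrix.sub_mulVec, Matrix.smul_mulVec, Matrix.one_mulVec] at h4
  exact (sub_eq_zero.1 h4).symm

open Classical in
lemma adjMat_mulVec {V : Type} [Fintype V] (G : SimpleGraph V) (x : V → ℝ) (v : V) :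
    (adjMat G *ᵥ x) v = ∑ y ∈ Finset.univ.filter (fun y => G.Adj v y), x y := by
  simp [adjMat, Matrix.mulVec, dotProduct, Finset.sum_filter]

open Classical in
lemma perron {V : Type} [Fintype V] (G : SimpleGraph V) (ρ : ℝ) (h : IsSpecRad G ρ) :
    ∃ (x : V → ℝ) (u : V), (∀ v, 0 ≤ x v) ∧ (∀ v, x v ≤ 1) ∧ x u = 1 ∧
      ∀ v, ∑ y ∈ Finset.univ.filter (fun y => G.Adj v y), x y = ρ * x v := by
  obtain ⟨⟨z, hz0, hz⟩, hmax⟩ := h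
  set y : V → ℝ := fun v => |z v| with hy
  have hyy : y ⬝ᵥ y = z ⬝ᵥ z := by
    simp [dotProduct, hy]
  have hle : z ⬝ᵥ (adjMat G *ᵥ z) ≤ y ⬝ᵥ (adjMat G *ᵥ y) := by
    simp only [dotProduct, adjMat_mulVec, Finset.mul_sum]
    refine Finset.sum_le_sum fun i _ => Finset.sum_le_sum fun j _ => ?_
    rw [hy, ← abs_mul]
    exact le_abs_self _
  have hzz : z ⬝ᵥ (adjMat G *ᵥ z) = ρ * (z ⬝ᵥ z) := by
    rw [hz, dotProduct_smul, smul_eq_mul]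
  obtain ⟨h1, h2⟩ := adjMat_posSemidef G ρ hmax y
  have hyeig := h2 (by rw [hyy] at *; linarith)
  have hne : ∃ v, z v ≠ 0 := by
    by_contra hcon
    push Not at hcon
    exact hz0 (funext hcon)
  obtain ⟨v0, hv0⟩ := hne
  have : Nonempty V := ⟨v0⟩
  obtain ⟨u, hu⟩ := Finite.exists_max y
  have hupos : 0 < y u := lt_of_lt_of_le (abs_pos.2 hv0) (hu v0)
  refine ⟨fun v => y v / y u, u, fun v => div_nonneg (abs_nonneg _) hupos.le,
    fun v => (div_le_one hupos).2 (hu v), div_self hupos.ne', fun v => ?_⟩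
  have h3 := congrFun hyeig v
  rw [adjMat_mulVec] at h3
  rw [← Finset.sum_div, h3]
  simp [mul_div_assoc]

lemma specRad_iso {V W : Type} [Fintype V] [Fintype W] (G : SimpleGraph V) (H : SimpleGraph W)
    (e : G ≃g H) (ρ ρ' : ℝ) (h : IsSpecRad G ρ) (h' : IsSpecRad H ρ') : ρ ≤ ρ' := by
  classical
  obtain ⟨x, hx0, hx⟩ := h.1
  apply h'.2
  refine ⟨fun w => x (e.symm w), ?_, ?_⟩
  · intro h0
    apply hx0
    funext v
    have := congrFun h0 (e v)
    simpa using this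
  · funext w
    have h1 := congrFun hx (e.symm w)
    rw [adjMat_mulVec] at h1 ⊢
    simp only [Pi.smul_apply] at h1 ⊢
    rw [← h1]
    refine Finset.sum_bij' (fun y _ => e.symm y) (fun y _ => e y) ?_ ?_ ?_ ?_ ?_
    · intro a ha
      simp only [Finset.mem_filter, Finset.mem_univ, true_and] at ha ⊢
      exact e.symm.map_adj_iff.2 ha
    · intro a ha
      simp only [Finset.mem_filter, Finset.mem_univ, true_and] at ha ⊢
      have := e.map_adj_iff.2 ha
      simpa using this
    · simp
    · simp
    · simp

lemma smin_root (t : ℕ) (ht : 46 ≤ t) : ∃ μ : ℝ, 1 < μ ∧ 2 * (t : ℝ) - 3 / 2 < μ ^ 2 - μ ∧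
    (μ ^ 2 - μ - 2 * t + 1) * (μ ^ 2 + μ) + (μ + t - 1) = 0 := by
  have htr : (46 : ℝ) ≤ t := by exact_mod_cast ht
  set F : ℝ → ℝ := fun μ => (μ ^ 2 - μ - 2 * t + 1) * (μ ^ 2 + μ) + (μ + t - 1) with hF
  set s : ℝ := Real.sqrt (8 * t - 5) with hs
  have hs2 : s ^ 2 = 8 * t - 5 := Real.sq_sqrt (by linarith)
  have hs0 : 0 ≤ s := Real.sqrt_nonneg _
  have hs1 : 10 < s := by
    nlinarith
  set a : ℝ := (1 + s) / 2 with ha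
  have ha2 : a ^ 2 - a = 2 * t - 3 / 2 := by
    rw [ha]; nlinarith
  have ha5 : 5 < a := by rw [ha]; linarith
  have hcont : ContinuousOn F (Set.Icc a (2 * t)) := by
    apply Continuous.continuousOn
    fun_prop
  have hFa : F a < 0 := by
    have h1 : a ^ 2 - a - 2 * t + 1 = - (1/2) := by linarith
    have h2 : (t : ℝ) = (a ^ 2 - a + 3 / 2) / 2 := by linarith
    simp only [hF]
    rw [h1]
    rw [h2]
    nlinarith
  have hat : a ≤ 2 * t := by nlinarith
  have hFb : 0 < F (2 * t) := by
    simp only [hF]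
    have h1 : 0 ≤ ((2 * (t : ℝ)) ^ 2 - 2 * t - 2 * t + 1) := by nlinarith
    have h2 : 0 ≤ ((2 * (t : ℝ)) ^ 2 + 2 * t) := by nlinarith
    have h3 := mul_nonneg h1 h2
    linarith
  obtain ⟨μ, hμ, hμ0⟩ := intermediate_value_Icc hat hcont ⟨hFa.le, hFb.le⟩
  have hne : a ≠ μ := by
    rintro rfl
    exact absurd hμ0 hFa.ne
  have hlt : a < μ := lt_of_le_of_ne hμ.1 hne
  exact ⟨μ, by linarith, by nlinarith, hμ0⟩

lemma smin_adj_ll (t : ℕ) (a b : Fin 2) :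
    (SminusG t).Adj (Sum.inl a) (Sum.inl b) ↔ a ≠ b := by
  simp [SminusG]
lemma smin_adj_lr (t : ℕ) (a : Fin 2) (c : Fin t) :
    (SminusG t).Adj (Sum.inl a) (Sum.inr c) ↔ ¬(a = 0 ∧ (c : ℕ) = 0) := by
  simp [SminusG]
lemma smin_adj_rl (t : ℕ) (a : Fin 2) (c : Fin t) :
    (SminusG t).Adj (Sum.inr c) (Sum.inl a) ↔ ¬(a = 0 ∧ (c : ℕ) = 0) := by
  simp [SminusG]
lemma smin_adj_rr (t : ℕ) (c d : Fin t) :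
    ¬ (SminusG t).Adj (Sum.inr c) (Sum.inr d) := by
  simp [SminusG]

lemma smin_bound (t : ℕ) (ht : 46 ≤ t) (ρ' : ℝ) (h : IsSpecRad (SminusG t) ρ') :
    1 < ρ' ∧ 2 * (t : ℝ) - 3 / 2 < ρ' ^ 2 - ρ' := by
  classical
  obtain ⟨μ, h1, h2, h3⟩ := smin_root t ht
  have hle : μ ≤ ρ' := by
    apply h.2
    set α : ℝ := 1 - 1 / (μ * (μ + 1)) with hα
    have hμ : μ ≠ 0 := by linarith
    have hμ1 : μ + 1 ≠ 0 := by linarith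
    obtain ⟨k, rfl⟩ : ∃ k, t = k + 1 := ⟨t - 1, by omega⟩
    refine ⟨Sum.elim ![α, 1] (fun c => if (c : ℕ) = 0 then 1 / μ else (1 + α) / μ), ?_, ?_⟩
    · intro h0
      have := congrFun h0 (Sum.inl 1)
      simp at this
    · funext v
      rw [adjMat_mulVec, Finset.sum_filter, Fintype.sum_sum_type]
      push_cast at h3
      rcases v with a | c
      · simp only [smin_adj_ll, smin_adj_lr]
        fin_cases a
        · simp [Fin.sum_univ_succ]
          rw [hα]
          field_simp
          linear_combination -h3
        · simp [Fin.sum_univ_succ]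
          rw [hα]
          field_simp
          linear_combination -h3
      · simp only [smin_adj_rl, smin_adj_rr]
        by_cases hc : (c : ℕ) = 0
        · have hc' : c = 0 := Fin.ext hc
          simp [hc']
          field_simp
        · have hc' : c ≠ 0 := fun h => hc (by rw [h]; rfl)
          simp [hc']
          field_simp
          try ring
  exact ⟨by linarith, by nlinarith⟩

/-- No path on five vertices. -/
def NoP5 {V : Type} (L : SimpleGraph V) : Prop :=
  ∀ a b c d e : V, L.Adj a b → L.Adj b c → L.Adj c d → L.Adj d e →
    a ≠ c → a ≠ d → a ≠ e → b ≠ d → b ≠ e → c ≠ e → False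

/-- Degree within `L`. -/
noncomputable def dg {V : Type} [Fintype V] (L : SimpleGraph V) (v : V) : ℕ := by
  classical exact (Finset.univ.filter (fun y => L.Adj v y)).card

/-- Number of leaf neighbours within `L`. -/
noncomputable def lf {V : Type} [Fintype V] (L : SimpleGraph V) (v : V) : ℕ := by
  classical exact (Finset.univ.filter (fun y => L.Adj v y ∧ dg L y = 1)).card

/-- Number of non-leaf neighbours within `L`. -/
noncomputable def nl {V : Type} [Fintype V] (L : SimpleGraph V) (v : V) : ℕ := by
  classical exact (Finset.univ.filter (fun y => L.Adj v y ∧ dg L y ≠ 1)).card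

section P5
variable {V : Type} [Fintype V] (L : SimpleGraph V)

lemma dg_eq (v : V) : dg L v = lf L v + nl L v := by
  classical
  have h := Finset.card_filter_add_card_filter_not (s := Finset.univ.filter (fun y => L.Adj v y))
    (fun y => dg L y = 1)
  rw [Finset.filter_filter, Finset.filter_filter] at h
  unfold lf nl
  conv_lhs => unfold dg
  exact h.symm

lemma dg_pos {v y : V} (h : L.Adj v y) : 1 ≤ dg L v := by
  classical
  simp only [dg]
  exact Finset.card_pos.2 ⟨y, by simp [h]⟩

lemma dg_exists_other {v y : V} (h : dg L y ≠ 1) (hv : L.Adj v y) :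
    ∃ z, L.Adj y z ∧ z ≠ v := by
  classical
  have h1 := dg_pos L hv.symm
  have h2 : 1 < dg L y := by omega
  simp only [dg] at h2
  obtain ⟨z, hz, hne⟩ := Finset.exists_mem_ne h2 v
  exact ⟨z, by simpa using hz, hne⟩

lemma dg_two {v y z : V} (h : L.Adj v y) (h' : L.Adj v z) (hne : y ≠ z) : 2 ≤ dg L v := by
  classical
  simp only [dg]
  exact Finset.one_lt_card.2 ⟨y, by simp [h], z, by simp [h'], hne⟩

lemma leaf_unique {l y z : V} (hl : dg L l = 1) (h : L.Adj l y) (h' : L.Adj l z) : y = z := by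
  by_contra hne
  have := dg_two L h h' hne
  omega

lemma lf_zero_of {v : V} (h : ∀ l, L.Adj v l → dg L l = 1 → False) : lf L v = 0 := by
  classical
  simp only [lf, Finset.card_eq_zero]
  ext y
  simp only [Finset.mem_filter, Finset.mem_univ, true_and, Finset.notMem_empty, iff_false]
  exact fun hy => h y hy.1 hy.2

lemma lf_pos_exists {v : V} (h : lf L v ≠ 0) : ∃ l, L.Adj v l ∧ dg L l = 1 := by
  by_contra hc
  exact h (lf_zero_of L fun l h1 h2 => hc ⟨l, h1, h2⟩)


lemma four_nbrs_aux (h5 : NoP5 L) {v b c e z e' : V}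
    (hb : L.Adj v b) (hc : L.Adj v c) (he : L.Adj v e)
    (hz : L.Adj v z) (hbc : b ≠ c) (hbe : b ≠ e) (hce : c ≠ e) (hzb : z ≠ b) (hzc : z ≠ c)
    (hze : z ≠ e) (he' : L.Adj e e') (hev : e' ≠ v) (h : L.Adj b c) : False := by
  have n1 := hb.ne
  have n2 := hc.ne
  have n3 := he.ne
  have n4 := hz.ne
  have n5 := he'.ne
  by_cases h1 : e' = b
  · subst h1
    exact h5 c e' e v z h.symm he'.symm he.symm hz hce n2.symm hzc.symm n1.symm hzb.symm hze.symm
  · by_cases h2 : e' = c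
    · subst h2
      exact h5 b e' e v z h he'.symm he.symm hz hbe n1.symm hzb.symm n2.symm hzc.symm hze.symm
    · exact h5 e' e v b c he'.symm he.symm hb h hev h1 h2 hbe.symm hce.symm n2

lemma four_nbrs (h5 : NoP5 L) {v b c e z b' c' e' : V}
    (hb : L.Adj v b) (hc : L.Adj v c) (he : L.Adj v e)
    (hz : L.Adj v z) (hbc : b ≠ c) (hbe : b ≠ e) (hce : c ≠ e) (hzb : z ≠ b) (hzc : z ≠ c)
    (hze : z ≠ e) (hb' : L.Adj b b') (hbv : b' ≠ v) (hc' : L.Adj c c') (hcv : c' ≠ v)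
    (he' : L.Adj e e') (hev : e' ≠ v) : False := by
  have n1 := hb.ne
  have n2 := hc.ne
  have n3 := he.ne
  by_cases h : L.Adj b c
  · exact four_nbrs_aux L h5 hb hc he hz hbc hbe hce hzb hzc hze he' hev h
  by_cases hh : L.Adj b e
  · exact four_nbrs_aux L h5 hb he hc hz hbe hbc hce.symm hzb hze hzc hc' hcv hh
  have k1 : b' ≠ c := fun q => h (q ▸ hb')
  have k2 : c' ≠ b := fun q => h (q ▸ hc').symm
  have k3 : b' ≠ e := fun q => hh (q ▸ hb')
  have hbc' : b' = c' := by
    by_contra q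
    exact h5 b' b v c c' hb'.symm hb.symm hc hc' hbv k1 q hbc k2.symm hcv.symm
  subst hbc'
  exact h5 b b' c v e hb' hc'.symm hc.symm he hbc n1.symm hbe hbv k3 hce

lemma nl_three (h5 : NoP5 L) {v : V} (h : 3 ≤ nl L v) : dg L v ≤ 3 := by
  classical
  by_contra hd
  have hd : 4 ≤ dg L v := by omega
  simp only [nl] at h
  simp only [dg] at hd
  obtain ⟨t, ht, htc⟩ := Finset.exists_subset_card_eq h
  obtain ⟨b, c, e, hbc, hbe, hce, rfl⟩ := Finset.card_eq_three.1 htc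
  have hmem : ∀ y ∈ ({b, c, e} : Finset V), L.Adj v y ∧ dg L y ≠ 1 := fun y hy => by
    simpa using ht hy
  obtain ⟨z, hz, hz'⟩ := Finset.exists_mem_notMem_of_card_lt_card
    (s := ({b, c, e} : Finset V)) (t := Finset.univ.filter (fun y => L.Adj v y)) (by omega)
  simp only [Finset.mem_filter, Finset.mem_univ, true_and, Finset.mem_insert,
    Finset.mem_singleton, not_or] at hz hz'
  obtain ⟨b1, b2⟩ := hmem b (by simp)
  obtain ⟨c1, c2⟩ := hmem c (by simp)
  obtain ⟨e1, e2⟩ := hmem e (by simp)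
  obtain ⟨b', b3, b4⟩ := dg_exists_other L b2 b1
  obtain ⟨c', c3, c4⟩ := dg_exists_other L c2 c1
  obtain ⟨e', e3, e4⟩ := dg_exists_other L e2 e1
  exact four_nbrs L h5 b1 c1 e1 hz hbc hbe hce hz'.1 hz'.2.1 hz'.2.2 b3 b4 c3 c4 e3 e4

lemma tri_leaf (h5 : NoP5 L) {v b c : V} (hb : L.Adj v b) (hc : L.Adj v c) (hbc : L.Adj b c)
    (h : lf L v ≠ 0) : lf L b = 0 := by
  obtain ⟨l, hl, hl1⟩ := lf_pos_exists L h
  apply lf_zero_of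
  intro k hk hk1
  have n1 : k ≠ c := by
    rintro rfl
    exact hb.ne (leaf_unique L hk1 hc.symm hbc.symm)
  have n2 : k ≠ v := by
    rintro rfl
    exact hbc.ne (leaf_unique L hk1 hb hc)
  have n3 : k ≠ l := by
    rintro rfl
    exact hb.ne (leaf_unique L hk1 hl.symm hk.symm)
  have n4 : l ≠ b := by
    rintro rfl
    exact hc.ne (leaf_unique L hl1 hb.symm hbc)
  have n5 : l ≠ c := by
    rintro rfl
    exact hb.ne (leaf_unique L hl1 hc.symm hbc.symm)
  exact h5 k b c v l hk.symm hbc hc.symm hl n1 n2 n3 hb.ne.symm n4.symm n5.symm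

lemma cyc_leaf (h5 : NoP5 L) {v b y c : V} (hb : L.Adj v b) (hby : L.Adj b y) (hyc : L.Adj y c)
    (hc : L.Adj c v) (hbc : b ≠ c) (hvy : v ≠ y) : lf L v = 0 := by
  apply lf_zero_of
  intro l hl hl1
  have n1 : l ≠ b := by
    rintro rfl
    exact hvy (leaf_unique L hl1 hb.symm hby)
  have n2 : l ≠ y := by
    rintro rfl
    exact hbc (leaf_unique L hl1 hby.symm hyc)
  have n3 : l ≠ c := by
    rintro rfl
    exact hvy (leaf_unique L hl1 hc hyc.symm)
  exact h5 l v b y c hl.symm hb hby hyc n1 n2 n3 hvy hc.ne.symm hbc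

lemma exists_core_pair (h5 : NoP5 L) {v : V} (h : 2 ≤ nl L v) :
    ∃ p q, L.Adj p q ∧ lf L p = 0 ∧ lf L q = 0 ∧ 2 ≤ dg L p ∧ 2 ≤ dg L q := by
  classical
  simp only [nl] at h
  obtain ⟨b, hb, c, hc, hbc⟩ := Finset.one_lt_card.1 h
  simp only [Finset.mem_filter, Finset.mem_univ, true_and] at hb hc
  obtain ⟨b1, b2⟩ := hb
  obtain ⟨c1, c2⟩ := hc
  have dv : 2 ≤ dg L v := dg_two L b1 c1 hbc
  have db : 2 ≤ dg L b := by have := dg_pos L b1.symm; omega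
  have dc : 2 ≤ dg L c := by have := dg_pos L c1.symm; omega
  by_cases hadj : L.Adj b c
  · by_cases hv : lf L v = 0
    · by_cases hbl : lf L b = 0
      · exact ⟨v, b, b1, hv, hbl, dv, db⟩
      · exact ⟨v, c, c1, hv, tri_leaf L h5 hadj b1.symm c1.symm hbl, dv, dc⟩
    · exact ⟨b, c, hadj, tri_leaf L h5 b1 c1 hadj hv, tri_leaf L h5 c1 b1 hadj.symm hv, db, dc⟩
  · obtain ⟨y, hy, hyv⟩ := dg_exists_other L b2 b1
    obtain ⟨y', hy', hyv'⟩ := dg_exists_other L c2 c1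
    have k1 : y ≠ c := fun q => hadj (q ▸ hy)
    have k2 : y' ≠ b := fun q => hadj (q ▸ hy').symm
    have hyy : y = y' := by
      by_contra q
      exact h5 y b v c y' hy.symm b1.symm c1 hy' hyv k1 q hbc k2.symm hyv'.symm
    subst hyy
    exact ⟨v, b, b1, cyc_leaf L h5 b1 hy hy'.symm c1.symm hbc hyv.symm,
      cyc_leaf L h5 hy hy'.symm c1.symm b1 hyv hbc, dv, db⟩

end P5

/-- The graph induced on the neighbourhood of `u`. -/
def LG {V : Type} (G : SimpleGraph V) (u : V) : SimpleGraph V where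
  Adj a b := G.Adj a b ∧ G.Adj u a ∧ G.Adj u b
  symm := ⟨fun _ _ h => ⟨h.1.symm, h.2.2, h.2.1⟩⟩
  loopless := ⟨fun _ h => h.1.ne rfl⟩

open Classical in
/-- Adjacency indicator. -/
noncomputable def aM {V : Type} (G : SimpleGraph V) (a b : V) : ℝ :=
  if G.Adj a b then (1 : ℝ) else 0

/-- Neighbourhood of `u`. -/
noncomputable def AA {V : Type} [Fintype V] (G : SimpleGraph V) (u : V) : Finset V := by
  classical exact Finset.univ.filter (fun y => G.Adj u y)

/-- Vertices at distance at least two from `u`. -/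
noncomputable def WW {V : Type} [Fintype V] (G : SimpleGraph V) (u : V) : Finset V := by
  classical exact Finset.univ.filter (fun y => y ≠ u ∧ ¬ G.Adj u y)

/-- Number of neighbours in `AA`, as a real number. -/
noncomputable def dA {V : Type} [Fintype V] (G : SimpleGraph V) (u v : V) : ℝ :=
  ∑ y ∈ AA G u, aM G v y

/-- Number of neighbours in `WW`, as a real number. -/
noncomputable def dW {V : Type} [Fintype V] (G : SimpleGraph V) (u v : V) : ℝ :=
  ∑ y ∈ WW G u, aM G v y

section Basic
variable {V : Type} [Fintype V] (G : SimpleGraph V) (u : V)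

lemma mem_AA {y : V} : y ∈ AA G u ↔ G.Adj u y := by simp [AA]
lemma mem_WW {y : V} : y ∈ WW G u ↔ y ≠ u ∧ ¬ G.Adj u y := by simp [WW]

lemma aM_symm (a b : V) : aM G a b = aM G b a := by
  by_cases h : G.Adj a b
  · simp [aM, h, h.symm]
  · have h' : ¬ G.Adj b a := fun h' => h h'.symm
    simp [aM, h, h']
lemma aM_one {a b : V} (h : G.Adj a b) : aM G a b = 1 := by simp [aM, h]
lemma aM_zero {a b : V} (h : ¬ G.Adj a b) : aM G a b = 0 := by simp [aM, h]
lemma aM_nonneg (a b : V) : 0 ≤ aM G a b := by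
  unfold aM; split_ifs <;> norm_num
lemma aM_le (a b : V) : aM G a b ≤ 1 := by
  unfold aM; split_ifs <;> norm_num
lemma aM_self (a : V) : aM G a a = 0 := by simp [aM]

lemma sum_split (F : V → ℝ) : ∑ y, F y = F u + ∑ y ∈ AA G u, F y + ∑ y ∈ WW G u, F y := by
  classical
  have h1 : (Finset.univ : Finset V) = insert u (AA G u ∪ WW G u) := by
    ext y
    simp only [Finset.mem_univ, Finset.mem_insert, Finset.mem_union, mem_AA, mem_WW, true_iff]
    tauto
  have h2 : Disjoint (AA G u) (WW G u) := by
    rw [Finset.disjoint_left]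
    intro y hy hy'
    exact ((mem_WW G u).1 hy').2 ((mem_AA G u).1 hy)
  rw [h1, Finset.sum_insert, Finset.sum_union h2]
  · ring
  · simp [mem_AA, mem_WW]

lemma dA_nonneg (v : V) : 0 ≤ dA G u v := Finset.sum_nonneg fun _ _ => aM_nonneg G _ _
lemma dW_nonneg (v : V) : 0 ≤ dW G u v := Finset.sum_nonneg fun _ _ => aM_nonneg G _ _

lemma zero_or_one_le (S : Finset V) (v : V) :
    (∑ y ∈ S, aM G v y = 0 ∧ ∀ y ∈ S, ¬ G.Adj v y) ∨ 1 ≤ ∑ y ∈ S, aM G v y := by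
  by_cases h : ∃ y ∈ S, G.Adj v y
  · right
    obtain ⟨y, hy, hv⟩ := h
    have := Finset.single_le_sum (f := fun y => aM G v y) (fun z _ => aM_nonneg G v z) hy
    simpa [aM_one G hv] using this
  · left
    push Not at h
    exact ⟨Finset.sum_eq_zero fun y hy => aM_zero G (h y hy), h⟩

lemma eig_A {x : V → ℝ} {ρ : ℝ} (hu : x u = 1)
    (eig : ∀ v, ∑ y, aM G v y * x y = ρ * x v) {v : V} (hv : v ∈ AA G u) :
    ρ * x v = 1 + ∑ y ∈ AA G u, aM G v y * x y + ∑ y ∈ WW G u, aM G v y * x y := by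
  rw [← eig v, sum_split G u, hu, aM_one G ((mem_AA G u).1 hv).symm]
  ring

lemma eig_W {x : V → ℝ} {ρ : ℝ}
    (eig : ∀ v, ∑ y, aM G v y * x y = ρ * x v) {v : V} (hv : v ∈ WW G u) :
    ρ * x v = ∑ y ∈ AA G u, aM G v y * x y + ∑ y ∈ WW G u, aM G v y * x y := by
  rw [← eig v, sum_split G u, aM_zero G (fun h => ((mem_WW G u).1 hv).2 h.symm)]
  ring

lemma eig_u {x : V → ℝ} {ρ : ℝ} (hu : x u = 1)
    (eig : ∀ v, ∑ y, aM G v y * x y = ρ * x v) : ∑ y ∈ AA G u, x y = ρ := by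
  have h := eig u
  rw [sum_split G u, hu, aM_self] at h
  have h1 : ∑ y ∈ AA G u, aM G u y * x y = ∑ y ∈ AA G u, x y :=
    Finset.sum_congr rfl fun y hy => by rw [aM_one G ((mem_AA G u).1 hy), one_mul]
  have h2 : ∑ y ∈ WW G u, aM G u y * x y = 0 :=
    Finset.sum_eq_zero fun y hy => by rw [aM_zero G ((mem_WW G u).1 hy).2, zero_mul]
  rw [h1, h2] at h
  linarith

lemma edge_count (m : ℝ) (hm : ∑ v, ∑ y, aM G v y = 2 * m) :
    2 * m = 2 * (AA G u).card + ∑ v ∈ AA G u, dA G u v + 2 * ∑ w ∈ WW G u, dA G u w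
      + ∑ w ∈ WW G u, dW G u w := by
  rw [← hm, sum_split G u]
  have h0 : ∑ y, aM G u y = (AA G u).card := by
    rw [sum_split G u, aM_self]
    have h1 : ∑ y ∈ AA G u, aM G u y = ∑ y ∈ AA G u, 1 :=
      Finset.sum_congr rfl fun y hy => aM_one G ((mem_AA G u).1 hy)
    have h2 : ∑ y ∈ WW G u, aM G u y = 0 :=
      Finset.sum_eq_zero fun y hy => aM_zero G ((mem_WW G u).1 hy).2
    rw [h1, h2]
    simp
  have hA : ∑ v ∈ AA G u, ∑ y, aM G v y = ∑ v ∈ AA G u, (1 + dA G u v + dW G u v) :=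
    Finset.sum_congr rfl fun v hv => by
      rw [sum_split G u, aM_one G ((mem_AA G u).1 hv).symm]; rfl
  have hW : ∑ v ∈ WW G u, ∑ y, aM G v y = ∑ v ∈ WW G u, (dA G u v + dW G u v) :=
    Finset.sum_congr rfl fun v hv => by
      rw [sum_split G u, aM_zero G (fun h => ((mem_WW G u).1 hv).2 h.symm), zero_add]; rfl
  have hs : ∑ v ∈ AA G u, dW G u v = ∑ v ∈ WW G u, dA G u v := by
    unfold dA dW
    rw [Finset.sum_comm]
    exact Finset.sum_congr rfl fun v _ => Finset.sum_congr rfl fun y _ => aM_symm G _ _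
  rw [h0, hA, hW]
  simp only [Finset.sum_add_distrib, hs]
  simp
  ring

lemma D_ident {x : V → ℝ} {ρ : ℝ} (hu : x u = 1)
    (eig : ∀ v, ∑ y, aM G v y * x y = ρ * x v)
    (m : ℝ) (hm : ∑ v, ∑ y, aM G v y = 2 * m) :
    m - ρ ^ 2 + ρ = ∑ v ∈ AA G u, (dA G u v / 2 - (dA G u v - 1) * x v)
      + ∑ w ∈ WW G u, (dA G u w * (1 - x w) + dW G u w / 2) := by
  have h1 := edge_count G u m hm
  have h2 := eig_u G u hu eig
  have h3 : ρ ^ 2 = (AA G u).card + ∑ v ∈ AA G u, dA G u v * x v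
      + ∑ w ∈ WW G u, dA G u w * x w := by
    have e1 : ρ ^ 2 = ∑ v ∈ AA G u, ρ * x v := by
      rw [← Finset.mul_sum, h2]; ring
    rw [e1, Finset.sum_congr rfl (fun v hv => eig_A G u hu eig hv)]
    simp only [Finset.sum_add_distrib]
    congr 1
    · congr 1
      · simp
      · rw [Finset.sum_comm]
        refine Finset.sum_congr rfl fun v _ => ?_
        rw [dA, Finset.sum_mul]
        exact Finset.sum_congr rfl fun y _ => by rw [aM_symm]
    · rw [Finset.sum_comm]
      refine Finset.sum_congr rfl fun v _ => ?_
      rw [dA, Finset.sum_mul]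
      exact Finset.sum_congr rfl fun y _ => by rw [aM_symm]
  have e2 : ∑ v ∈ AA G u, (dA G u v / 2 - (dA G u v - 1) * x v)
      = (∑ v ∈ AA G u, dA G u v) / 2 - ∑ v ∈ AA G u, dA G u v * x v + ∑ v ∈ AA G u, x v := by
    rw [Finset.sum_div, ← Finset.sum_sub_distrib, ← Finset.sum_add_distrib]
    exact Finset.sum_congr rfl fun v _ => by ring
  have e3 : ∑ w ∈ WW G u, (dA G u w * (1 - x w) + dW G u w / 2)
      = ∑ w ∈ WW G u, dA G u w - ∑ w ∈ WW G u, dA G u w * x w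
        + (∑ w ∈ WW G u, dW G u w) / 2 := by
    rw [Finset.sum_div, ← Finset.sum_sub_distrib, ← Finset.sum_add_distrib]
    exact Finset.sum_congr rfl fun v _ => by ring
  rw [e2, e3, h2]
  linarith

lemma dA_eq_dg {v : V} (hv : v ∈ AA G u) : dA G u v = dg (LG G u) v := by
  classical
  have h1 : (Finset.univ.filter (fun y => (LG G u).Adj v y))
      = (AA G u).filter (fun y => G.Adj v y) := by
    ext y
    have := (mem_AA G u).1 hv
    rw [Finset.mem_filter, Finset.mem_filter, mem_AA]
    change _ ∧ G.Adj v y ∧ G.Adj u v ∧ G.Adj u y ↔ _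
    have := Finset.mem_univ y
    tauto
  unfold dg dA
  rw [h1, Finset.card_filter]
  push_cast
  exact Finset.sum_congr rfl fun y _ => by simp [aM]

lemma dA_eq_card (v : V) : ∃ S : Finset V, (∀ y, y ∈ S ↔ G.Adj u y ∧ G.Adj v y) ∧
    dA G u v = S.card := by
  classical
  refine ⟨(AA G u).filter (fun y => G.Adj v y), fun y => by simp [mem_AA], ?_⟩
  unfold dA
  rw [Finset.card_filter]
  push_cast
  exact Finset.sum_congr rfl fun y _ => by simp [aM]

lemma noP5 (hfree : ¬ ContainsSub theta133 G) : NoP5 (LG G u) := by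
  intro a b c d e hab hbc hcd hde ac ad ae bd be ce
  exact theta_of G hfree u c a b e d hbc.2.2 hab.2.1 hab.1 hbc.1 hde.2.2 hde.1.symm hcd.1.symm
    hab.2.2.ne hde.2.1.ne ac.symm ce ae ad be bd

lemma dA_le_three (hfree : ¬ ContainsSub theta133 G) {w v p q : V} (hw : w ∈ WW G u)
    (hwv : G.Adj w v) (h1 : (LG G u).Adj v p) (h2 : (LG G u).Adj p q) (hne : q ≠ v) :
    dA G u w ≤ 3 := by
  classical
  obtain ⟨S, hS, hc⟩ := dA_eq_card G u w
  rw [hc]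
  by_contra hcon
  have h4 : 3 < S.card := by
    by_contra h; exact hcon (by exact_mod_cast not_lt.1 h)
  obtain ⟨z, hz, hz'⟩ := Finset.exists_mem_notMem_of_card_lt_card
    (s := ({v, p, q} : Finset V)) (t := S) (lt_of_le_of_lt Finset.card_le_three h4)
  simp only [Finset.mem_insert, Finset.mem_singleton, not_or] at hz'
  obtain ⟨z1, z2⟩ := (hS z).1 hz
  obtain ⟨w1, w2⟩ := (mem_WW G u).1 hw
  exact theta_of G hfree u v z w q p h1.2.1 z1 z2.symm hwv h2.2.2 h2.1.symm h1.1.symm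
    w1.symm h1.2.2.ne (Ne.symm hz'.1) hne.symm hz'.2.2 hz'.2.1
    (fun h => w2 (h ▸ h2.2.2)) (fun h => w2 (h ▸ h1.2.2))

end Basic

section Weights
variable {V : Type} [Fintype V]

/-- Redistributed weight of a vertex. -/
noncomputable def f2 (L : SimpleGraph V) (x : V → ℝ) (v : V) : ℝ :=
  (dg L v : ℝ) / 2 - ((dg L v : ℝ) - 1) * x v + (lf L v : ℝ) / 2
    - (if dg L v = 1 then 1 / 2 else 0)

lemma sum_lf (L : SimpleGraph V) :
    ∑ v, (lf L v : ℝ) = ∑ v, (if dg L v = 1 then (1 : ℝ) else 0) := by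
  classical
  have h1 : ∀ v, (lf L v : ℝ) = ∑ y, (if L.Adj v y ∧ dg L y = 1 then (1 : ℝ) else 0) := by
    intro v
    unfold lf
    rw [Finset.card_filter]
    push_cast
    rfl
  have h2 : ∀ y, (dg L y : ℝ) = ∑ v, (if L.Adj v y then (1 : ℝ) else 0) := by
    intro v
    unfold dg
    rw [Finset.card_filter]
    push_cast
    exact Finset.sum_congr rfl fun y _ => by simp only [L.adj_comm v y]
  simp only [h1]
  rw [Finset.sum_comm]
  refine Finset.sum_congr rfl fun y _ => ?_
  by_cases h : dg L y = 1
  · have h3 := h2 y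
    rw [h] at h3
    simp only [h, and_true, if_true]
    rw [← h3]
    simp
  · simp [h]

lemma dg_zero_of_not_mem (G : SimpleGraph V) (u : V) {v : V} (h : v ∉ AA G u) :
    dg (LG G u) v = 0 := by
  classical
  by_contra hc
  unfold dg at hc
  obtain ⟨y, hy⟩ := Finset.card_pos.1 (Nat.pos_of_ne_zero hc)
  have := (Finset.mem_filter.1 hy).2
  exact h ((mem_AA G u).2 this.2.1)

lemma lf_le (L : SimpleGraph V) (v : V) : lf L v ≤ dg L v := by
  rw [dg_eq]; omega

lemma sum_f2 (G : SimpleGraph V) (u : V) (x : V → ℝ) :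
    ∑ v ∈ AA G u, (dA G u v / 2 - (dA G u v - 1) * x v) = ∑ v ∈ AA G u, f2 (LG G u) x v := by
  have h1 : ∑ v ∈ AA G u, (lf (LG G u) v : ℝ)
      = ∑ v ∈ AA G u, (if dg (LG G u) v = 1 then (1 : ℝ) else 0) := by
    rw [Finset.sum_subset (Finset.subset_univ (AA G u)) (f := fun v => (lf (LG G u) v : ℝ)),
      Finset.sum_subset (Finset.subset_univ (AA G u))
        (f := fun v => (if dg (LG G u) v = 1 then (1 : ℝ) else 0))]
    · exact sum_lf _
    · intro v _ hv
      simp [dg_zero_of_not_mem G u hv]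
    · intro v _ hv
      have h1 := dg_zero_of_not_mem G u hv
      have h2 := lf_le (LG G u) v
      have h3 : lf (LG G u) v = 0 := by omega
      simp [h3]
  have h2 : ∑ v ∈ AA G u, f2 (LG G u) x v
      = ∑ v ∈ AA G u, (dA G u v / 2 - (dA G u v - 1) * x v)
        + (∑ v ∈ AA G u, (lf (LG G u) v : ℝ)) / 2
        - (∑ v ∈ AA G u, (if dg (LG G u) v = 1 then (1 : ℝ) else 0)) / 2 := by
    rw [Finset.sum_div, Finset.sum_div, ← Finset.sum_add_distrib, ← Finset.sum_sub_distrib]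
    refine Finset.sum_congr rfl fun v hv => ?_
    rw [dA_eq_dg G u hv, f2]
    split_ifs <;> ring
  rw [h2, h1]
  ring

lemma f2_zero (L : SimpleGraph V) (x : V → ℝ) {v : V} (h : dg L v = 0) : f2 L x v = x v := by
  have h2 := lf_le L v
  have h3 : lf L v = 0 := by omega
  simp [f2, h, h3]

lemma f2_one (L : SimpleGraph V) (x : V → ℝ) {v : V} (h : dg L v = 1) :
    f2 L x v = (lf L v : ℝ) / 2 := by
  simp [f2, h]

lemma f2_two (L : SimpleGraph V) (x : V → ℝ) {v : V} (h : 2 ≤ dg L v) :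
    f2 L x v = (nl L v : ℝ) / 2 + lf L v - ((nl L v : ℝ) + lf L v - 1) * x v := by
  have h1 : dg L v ≠ 1 := by omega
  rw [f2, if_neg h1, dg_eq]
  push_cast
  ring

lemma f2_nl0 (L : SimpleGraph V) (x : V → ℝ) (hx : ∀ v, x v ≤ 1) {v : V} (h : 2 ≤ dg L v)
    (hn : nl L v = 0) : 1 ≤ f2 L x v := by
  rw [f2_two L x h, hn]
  have h1 : (2 : ℝ) ≤ lf L v := by
    rw [dg_eq, hn] at h; exact_mod_cast h
  have := hx v
  push_cast
  nlinarith

lemma f2_nl1 (L : SimpleGraph V) (x : V → ℝ) (hx : ∀ v, x v ≤ 1) {v : V} (h : 2 ≤ dg L v)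
    (hn : nl L v = 1) : 1 / 2 ≤ f2 L x v := by
  rw [f2_two L x h, hn]
  have h1 : (0 : ℝ) ≤ lf L v := by positivity
  have := hx v
  push_cast
  nlinarith

lemma f2_nl2 (L : SimpleGraph V) (x : V → ℝ) (hx : ∀ v, x v ≤ 1) {v : V} (h : 2 ≤ dg L v)
    (hn : nl L v = 2) : 0 ≤ f2 L x v := by
  rw [f2_two L x h, hn]
  have h1 : (0 : ℝ) ≤ lf L v := by positivity
  have := hx v
  push_cast
  nlinarith

end Weights

/-- Everything we know about a counterexample. -/
structure Ctx {V : Type} [Fintype V] (G : SimpleGraph V) (u : V) (x : V → ℝ) (ρ : ℝ) : Prop where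
  h0 : ∀ v, 0 ≤ x v
  h1 : ∀ v, x v ≤ 1
  hu : x u = 1
  eig : ∀ v, ∑ y, aM G v y * x y = ρ * x v
  free : ¬ ContainsSub theta133 G
  hρ : 10 < ρ
  hD : ∑ v ∈ AA G u, f2 (LG G u) x v
      + ∑ w ∈ WW G u, (dA G u w * (1 - x w) + dW G u w / 2) < 3 / 2

section Cases
variable {V : Type} [Fintype V] {G : SimpleGraph V} {u : V} {x : V → ℝ} {ρ : ℝ}

lemma Ctx.sum_le (C : Ctx G u x ρ) (S : Finset V) (v : V) :
    ∑ y ∈ S, aM G v y * x y ≤ ∑ y ∈ S, aM G v y :=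
  Finset.sum_le_sum fun y _ => mul_le_of_le_one_right (aM_nonneg G v y) (C.h1 y)

lemma Ctx.bound_A (C : Ctx G u x ρ) {v : V} (hv : v ∈ AA G u) :
    10 * x v ≤ 1 + dg (LG G u) v + dW G u v := by
  have h := eig_A G u C.hu C.eig hv
  have h1 := C.sum_le (AA G u) v
  have h2 := C.sum_le (WW G u) v
  have h3 := dA_eq_dg G u hv
  have h4 := mul_le_mul_of_nonneg_right C.hρ.le (C.h0 v)
  unfold dA at h3
  unfold dW
  linarith

lemma Ctx.bound_W (C : Ctx G u x ρ) {w : V} (hw : w ∈ WW G u) :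
    10 * x w ≤ dA G u w + dW G u w := by
  have h := eig_W G u C.eig hw
  have h1 := C.sum_le (AA G u) w
  have h2 := C.sum_le (WW G u) w
  have h4 := mul_le_mul_of_nonneg_right C.hρ.le (C.h0 w)
  unfold dA dW
  linarith

lemma Ctx.bound_pair (C : Ctx G u x ρ) {v q : V} (hvq : (LG G u).Adj v q) :
    10 * x v ≤ dg (LG G u) v + x q + dW G u v := by
  classical
  have hv : v ∈ AA G u := (mem_AA G u).2 hvq.2.1
  have hq : q ∈ AA G u := (mem_AA G u).2 hvq.2.2
  have h := eig_A G u C.hu C.eig hv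
  have h2 := C.sum_le (WW G u) v
  have h3 := dA_eq_dg G u hv
  have h4 := mul_le_mul_of_nonneg_right C.hρ.le (C.h0 v)
  have h5 := C.sum_le ((AA G u).erase q) v
  rw [← Finset.add_sum_erase _ _ hq, aM_one G hvq.1] at h
  unfold dA at h3
  rw [← Finset.add_sum_erase _ _ hq, aM_one G hvq.1] at h3
  unfold dW
  linarith

lemma Ctx.wterm_nonneg (C : Ctx G u x ρ) (w : V) :
    0 ≤ dA G u w * (1 - x w) + dW G u w / 2 := by
  have h1 := dA_nonneg G u w
  have h2 := dW_nonneg G u w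
  have h3 := C.h1 w
  have h4 := mul_nonneg h1 (sub_nonneg.2 h3)
  linarith

lemma Ctx.no_core (C : Ctx G u x ρ) (v : V) : nl (LG G u) v ≤ 1 := by
  classical
  by_contra hcon
  set L := LG G u with hL
  have h5 : NoP5 L := noP5 G u C.free
  obtain ⟨p, q, hpq, hp, hq, dp, dq⟩ := exists_core_pair L h5 (v := v) (by omega)
  set Q := (AA G u).filter (fun v => lf L v = 0 ∧ 2 ≤ dg L v) with hQ
  have hQmem : ∀ v, v ∈ Q ↔ v ∈ AA G u ∧ lf L v = 0 ∧ 2 ≤ dg L v := fun v => by simp [hQ]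
  -- weight of a vertex of Q
  have hd3 : ∀ v ∈ Q, dg L v = 2 ∨ dg L v = 3 := by
    intro v hv
    obtain ⟨_, h1, h2⟩ := (hQmem v).1 hv
    have h3 := dg_eq L v
    by_cases h : 3 ≤ nl L v
    · have := nl_three L h5 h
      omega
    · omega
  have hf2 : ∀ v ∈ Q, f2 L x v = (dg L v : ℝ) / 2 - ((dg L v : ℝ) - 1) * x v := by
    intro v hv
    obtain ⟨_, h1, h2⟩ := (hQmem v).1 hv
    rw [f2_two L x h2]
    have h3 := dg_eq L v
    rw [h1] at h3
    rw [h1, h3]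
    push_cast
    ring
  have hrest : ∀ v ∈ AA G u, v ∉ Q → 0 ≤ f2 L x v := by
    intro v hv hvQ
    by_cases e0 : dg L v = 0
    · rw [f2_zero L x e0]; exact C.h0 v
    by_cases e1 : dg L v = 1
    · rw [f2_one L x e1]; positivity
    have e2 : 2 ≤ dg L v := by omega
    have e3 : lf L v ≠ 0 := fun h => hvQ ((hQmem v).2 ⟨hv, h, e2⟩)
    have e4 := dg_eq L v
    have e5 : nl L v = 0 ∨ nl L v = 1 ∨ nl L v = 2 := by
      by_cases h : 3 ≤ nl L v
      · have := nl_three L h5 h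
        omega
      · omega
    rcases e5 with h | h | h
    · linarith [f2_nl0 L x C.h1 e2 h]
    · linarith [f2_nl1 L x C.h1 e2 h]
    · exact f2_nl2 L x C.h1 e2 h
  have hA : ∑ v ∈ Q, f2 L x v ≤ ∑ v ∈ AA G u, f2 L x v :=
    Finset.sum_le_sum_of_subset_of_nonneg (Finset.filter_subset _ _) hrest
  have hW : ∑ v ∈ Q, 7 / 10 * dW G u v
      ≤ ∑ w ∈ WW G u, (dA G u w * (1 - x w) + dW G u w / 2) := by
    have e1 : ∑ v ∈ Q, 7 / 10 * dW G u v = ∑ w ∈ WW G u, 7 / 10 * ∑ v ∈ Q, aM G w v := by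
      rw [← Finset.mul_sum, ← Finset.mul_sum]
      congr 1
      unfold dW
      rw [Finset.sum_comm]
      exact Finset.sum_congr rfl fun v _ => Finset.sum_congr rfl fun y _ => aM_symm G _ _
    rw [e1]
    refine Finset.sum_le_sum fun w hw => ?_
    rcases em (∃ v ∈ Q, G.Adj w v) with ⟨v, hv, hwv⟩ | hno
    · obtain ⟨k1, k2, k3⟩ := (hQmem v).1 hv
      have hnl : nl L v ≠ 0 := by
        have := dg_eq L v
        omega
      obtain ⟨y, hy, hy'⟩ : ∃ y, L.Adj v y ∧ dg L y ≠ 1 := by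
        unfold nl at hnl
        obtain ⟨y, hy⟩ := Finset.card_pos.1 (Nat.pos_of_ne_zero hnl)
        exact ⟨y, (Finset.mem_filter.1 hy).2⟩
      obtain ⟨z, hz, hzv⟩ := dg_exists_other L hy' hy
      have a1 := dA_le_three G u C.free hw hwv hy hz hzv
      have a2 := C.bound_W hw
      have a3 : ∑ v ∈ Q, aM G w v ≤ dA G u w :=
        Finset.sum_le_sum_of_subset_of_nonneg (Finset.filter_subset _ _)
          (fun y _ _ => aM_nonneg G _ _)
      have a4 := dA_nonneg G u w
      have a5 := dW_nonneg G u w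
      have a6 := mul_le_mul_of_nonneg_left a2 a4
      have a7 := mul_nonneg a4 (sub_nonneg.2 a1)
      have a8 := mul_nonneg a5 (sub_nonneg.2 a1)
      nlinarith
    · have e2 : ∑ v ∈ Q, aM G w v = 0 :=
        Finset.sum_eq_zero fun y hy => aM_zero G fun h => hno ⟨y, hy, h⟩
      rw [e2, mul_zero]
      exact C.wterm_nonneg w
  have hpQ : p ∈ Q := (hQmem p).2 ⟨(mem_AA G u).2 hpq.2.1, hp, dp⟩
  have hqQ : q ∈ Q := (hQmem q).2 ⟨(mem_AA G u).2 hpq.2.2, hq, dq⟩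
  have hlow : ∀ v ∈ Q, 7 / 10 + 1 / 2 * dW G u v ≤ f2 L x v + 7 / 10 * dW G u v := by
    intro v hv
    have b1 := C.bound_A ((hQmem v).1 hv).1
    rw [hf2 v hv]
    have b2 := dW_nonneg G u v
    rw [← hL] at b1
    rcases hd3 v hv with h | h <;> rw [h] at b1 ⊢ <;> push_cast at b1 ⊢ <;> linarith
  have hpair : f2 L x p + 7 / 10 * dW G u p + (f2 L x q + 7 / 10 * dW G u q)
      ≤ ∑ v ∈ Q, (f2 L x v + 7 / 10 * dW G u v) := by
    rw [← Finset.sum_pair (f := fun v => f2 L x v + 7 / 10 * dW G u v) hpq.1.ne]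
    refine Finset.sum_le_sum_of_subset_of_nonneg ?_ ?_
    · intro y hy
      simp only [Finset.mem_insert, Finset.mem_singleton] at hy
      rcases hy with rfl | rfl <;> assumption
    · intro y hy _
      have := hlow y hy
      have := dW_nonneg G u y
      linarith
  rw [Finset.sum_add_distrib] at hpair
  have hD := C.hD
  rw [← hL] at hD
  have lp := hlow p hpQ
  have lq := hlow q hqQ
  have np := dW_nonneg G u p
  have nq := dW_nonneg G u q
  have bp := C.bound_A ((hQmem p).1 hpQ).1
  have bq := C.bound_A ((hQmem q).1 hqQ).1
  have cp := C.bound_pair hpq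
  have cq := C.bound_pair hpq.symm
  rw [← hL] at bp bq cp cq
  have fp := hf2 p hpQ
  have fq := hf2 q hqQ
  have zp : dW G u p = 0 ∨ 1 ≤ dW G u p := (zero_or_one_le G (WW G u) p).imp And.left id
  have zq : dW G u q = 0 ∨ 1 ≤ dW G u q := (zero_or_one_le G (WW G u) q).imp And.left id
  rcases zp with zp | zp
  · rcases zq with zq | zq
    · rcases hd3 p hpQ with h | h <;> rcases hd3 q hqQ with h' | h' <;>
        rw [h] at fp bp cp <;> rw [h'] at fq bq cq <;>
        push_cast at fp bp cp fq bq cq <;> linarith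
    · linarith
  · linarith

end Cases

section Tree
variable {V : Type} [Fintype V]

lemma lf_ge (L : SimpleGraph V) {v l : V} (h : L.Adj v l) (h1 : dg L l = 1) : 1 ≤ lf L v := by
  classical
  unfold lf
  exact Finset.card_pos.2 ⟨l, by simp [h, h1]⟩

lemma nl_ge (L : SimpleGraph V) {v l : V} (h : L.Adj v l) (h1 : dg L l ≠ 1) : 1 ≤ nl L v := by
  classical
  unfold nl
  exact Finset.card_pos.2 ⟨l, by simp [h, h1]⟩

lemma exists_nbr (L : SimpleGraph V) {v : V} (h : dg L v ≠ 0) : ∃ y, L.Adj v y := by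
  classical
  unfold dg at h
  obtain ⟨y, hy⟩ := Finset.card_pos.1 (Nat.pos_of_ne_zero h)
  exact ⟨y, (Finset.mem_filter.1 hy).2⟩

variable {G : SimpleGraph V} {u : V} {x : V → ℝ} {ρ : ℝ}

lemma Ctx.f2_half (C : Ctx G u x ρ) {v : V} (h : 2 ≤ dg (LG G u) v) :
    1 / 2 ≤ f2 (LG G u) x v := by
  have h1 := C.no_core v
  rcases Nat.le_one_iff_eq_zero_or_eq_one.1 h1 with h2 | h2
  · linarith [f2_nl0 _ x C.h1 h h2]
  · exact f2_nl1 _ x C.h1 h h2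

lemma Ctx.f2_nonneg (C : Ctx G u x ρ) (v : V) : 0 ≤ f2 (LG G u) x v := by
  by_cases e0 : dg (LG G u) v = 0
  · rw [f2_zero _ x e0]; exact C.h0 v
  by_cases e1 : dg (LG G u) v = 1
  · rw [f2_one _ x e1]; positivity
  linarith [C.f2_half (v := v) (by omega)]

lemma Ctx.pair (C : Ctx G u x ρ) :
    ∃ c1 c2, (LG G u).Adj c1 c2 ∧ 1 ≤ f2 (LG G u) x c1 + f2 (LG G u) x c2 := by
  by_cases hbig : ∃ v, 2 ≤ dg (LG G u) v
  · obtain ⟨v, hv⟩ := hbig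
    rcases Nat.le_one_iff_eq_zero_or_eq_one.1 (C.no_core v) with h2 | h2
    · obtain ⟨y, hy⟩ := exists_nbr (LG G u) (v := v) (by omega)
      exact ⟨v, y, hy, by linarith [f2_nl0 _ x C.h1 hv h2, C.f2_nonneg y]⟩
    · obtain ⟨y, hy, hy1⟩ : ∃ y, (LG G u).Adj v y ∧ dg (LG G u) y ≠ 1 := by
        classical
        have hpos : 0 < nl (LG G u) v := by omega
        unfold nl at hpos
        obtain ⟨y, hy⟩ := Finset.card_pos.1 hpos
        exact ⟨y, (Finset.mem_filter.1 hy).2⟩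
      have h3 := dg_pos _ hy.symm
      exact ⟨v, y, hy, by
        linarith [C.f2_half hv, C.f2_half (v := y) (by omega)]⟩
  · push Not at hbig
    by_cases hall : ∀ v ∈ AA G u, dg (LG G u) v = 0
    · exfalso
      have h1 : ∑ v ∈ AA G u, f2 (LG G u) x v = ρ := by
        rw [← eig_u G u C.hu C.eig]
        exact Finset.sum_congr rfl fun v hv => f2_zero _ x (hall v hv)
      have h2 := C.hD
      have h3 : 0 ≤ ∑ w ∈ WW G u, (dA G u w * (1 - x w) + dW G u w / 2) :=
        Finset.sum_nonneg fun w _ => C.wterm_nonneg w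
      have := C.hρ
      linarith
    · push Not at hall
      obtain ⟨v, _, hv0⟩ := hall
      obtain ⟨y, hy⟩ := exists_nbr (LG G u) hv0
      have e1 : dg (LG G u) v = 1 := by have := hbig v; omega
      have e2 : dg (LG G u) y = 1 := by have := hbig y; have := dg_pos _ hy.symm; omega
      refine ⟨v, y, hy, ?_⟩
      rw [f2_one _ x e1, f2_one _ x e2]
      have k1 : (1 : ℝ) ≤ lf (LG G u) v := by exact_mod_cast lf_ge _ hy e2
      have k2 : (1 : ℝ) ≤ lf (LG G u) y := by exact_mod_cast lf_ge _ hy.symm e1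
      linarith

lemma Ctx.struct (C : Ctx G u x ρ) (hiso : ∀ v, ∃ y, G.Adj v y) :
    ∃ c1 c2, (LG G u).Adj c1 c2 ∧
      (∀ y ∈ AA G u, y ≠ c1 → y ≠ c2 → dg (LG G u) y = 0 ∨
        (dg (LG G u) y = 1 ∧ ((LG G u).Adj y c1 ∨ (LG G u).Adj y c2))) ∧ WW G u = ∅ := by
  classical
  obtain ⟨c1, c2, hc, hc1⟩ := C.pair
  set L := LG G u with hL
  set R := ((AA G u).erase c1).erase c2 with hR
  have m1 : c1 ∈ AA G u := (mem_AA G u).2 hc.2.1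
  have m2 : c2 ∈ (AA G u).erase c1 :=
    Finset.mem_erase.2 ⟨hc.1.ne.symm, (mem_AA G u).2 hc.2.2⟩
  have hsum : ∀ F : V → ℝ, ∑ v ∈ AA G u, F v = F c1 + (F c2 + ∑ v ∈ R, F v) := by
    intro F
    rw [← Finset.add_sum_erase _ _ m1, ← Finset.add_sum_erase _ _ m2]
  have hD := C.hD
  rw [← hL, hsum] at hD
  have hWnn : 0 ≤ ∑ w ∈ WW G u, (dA G u w * (1 - x w) + dW G u w / 2) :=
    Finset.sum_nonneg fun w _ => C.wterm_nonneg w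
  have hRnn : 0 ≤ ∑ v ∈ R, f2 L x v := Finset.sum_nonneg fun v _ => C.f2_nonneg v
  have hsmall : ∀ y ∈ AA G u, y ≠ c1 → y ≠ c2 → f2 L x y < 1 / 2 := by
    intro y hy h1 h2
    have hyR : y ∈ R := Finset.mem_erase.2 ⟨h2, Finset.mem_erase.2 ⟨h1, hy⟩⟩
    have := Finset.single_le_sum (f := fun v => f2 L x v) (fun v _ => C.f2_nonneg v) hyR
    linarith
  have hstr : ∀ y ∈ AA G u, y ≠ c1 → y ≠ c2 → dg L y = 0 ∨
      (dg L y = 1 ∧ (L.Adj y c1 ∨ L.Adj y c2)) := by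
    intro y hy h1 h2
    have hs := hsmall y hy h1 h2
    by_cases e0 : dg L y = 0
    · exact Or.inl e0
    by_cases e2 : 2 ≤ dg L y
    · have := C.f2_half e2
      rw [← hL] at this
      linarith
    have e1 : dg L y = 1 := by omega
    refine Or.inr ⟨e1, ?_⟩
    obtain ⟨z, hz⟩ := exists_nbr L e0
    have hz1 : dg L z ≠ 1 := by
      intro h
      have k1 : (1 : ℝ) ≤ lf L y := by exact_mod_cast lf_ge _ hz h
      rw [f2_one L x e1] at hs
      linarith
    by_cases a1 : z = c1
    · exact Or.inl (a1 ▸ hz)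
    by_cases a2 : z = c2
    · exact Or.inr (a2 ▸ hz)
    exfalso
    have hz2 := dg_pos L hz.symm
    have := C.f2_half (v := z) (by rw [← hL]; omega)
    have h4 := hsmall z ((mem_AA G u).2 hz.2.2) a1 a2
    rw [← hL] at this
    linarith
  refine ⟨c1, c2, hc, hstr, ?_⟩
  rw [Finset.eq_empty_iff_forall_notMem]
  intro w hw
  have hwt := Finset.single_le_sum (f := fun w => dA G u w * (1 - x w) + dW G u w / 2)
    (fun w _ => C.wterm_nonneg w) hw
  have hA0 := dA_nonneg G u w
  have hprod := mul_nonneg hA0 (sub_nonneg.2 (C.h1 w))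
  have hW0 : dW G u w = 0 := by
    rcases zero_or_one_le G (WW G u) w with h | h
    · exact h.1
    · exfalso
      change 1 ≤ dW G u w at h
      linarith
  have hA1 : 1 ≤ dA G u w := by
    rcases zero_or_one_le G (AA G u) w with h | h
    · exfalso
      rcases zero_or_one_le G (WW G u) w with h' | h'
      · obtain ⟨y, hy⟩ := hiso w
        by_cases k1 : G.Adj u y
        · exact h.2 y ((mem_AA G u).2 k1) hy
        · refine h'.2 y ((mem_WW G u).2 ⟨?_, k1⟩) hy
          rintro rfl
          exact ((mem_WW G y).1 hw).2 hy.symm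
      · change 1 ≤ dW G u w at h'
        linarith
    · exact h
  have hxw : 1 / 2 < x w := by
    by_contra hcon
    push Not at hcon
    have : 1 * (1 / 2) ≤ dA G u w * (1 - x w) :=
      mul_le_mul hA1 (by linarith) (by norm_num) hA0
    linarith
  have heig := eig_W G u C.eig hw
  have hz : ∑ y ∈ WW G u, aM G w y * x y = 0 := by
    apply le_antisymm
    · have := C.sum_le (WW G u) w
      change _ ≤ dW G u w at this
      linarith
    · exact Finset.sum_nonneg fun y _ => mul_nonneg (aM_nonneg G w y) (C.h0 y)
  rw [hz, hsum] at heig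
  have hRle : ∑ y ∈ R, aM G w y * x y ≤ ∑ y ∈ R, f2 L x y := by
    refine Finset.sum_le_sum fun y hy => ?_
    obtain ⟨y2, hy'⟩ := Finset.mem_erase.1 hy
    obtain ⟨y1, hyA⟩ := Finset.mem_erase.1 hy'
    by_cases hadj : G.Adj w y
    · rcases hstr y hyA y1 y2 with h | ⟨_, h⟩
      · rw [f2_zero L x h, aM_one G hadj, one_mul]
      · exfalso
        have h3 : dA G u w ≤ 3 := by
          rcases h with h | h
          · exact dA_le_three G u C.free hw hadj h hc y2.symm
          · exact dA_le_three G u C.free hw hadj h hc.symm y1.symm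
        have := C.bound_W hw
        linarith
    · rw [aM_zero G hadj, zero_mul]
      exact C.f2_nonneg y
  have b1 : aM G w c1 * x c1 ≤ 1 := mul_le_one₀ (aM_le G _ _) (C.h0 _) (C.h1 _)
  have b2 : aM G w c2 * x c2 ≤ 1 := mul_le_one₀ (aM_le G _ _) (C.h0 _) (C.h1 _)
  have h4 := mul_le_mul_of_nonneg_right C.hρ.le (C.h0 w)
  linarith

end Tree

lemma final_numeric (a b s m : ℕ) (ρ x1 x2 : ℝ) (hm : m = 3 + 2 * (a + b) + s) (hme : Even m)
    (hρ : 10 < ρ) (hD : (m : ℝ) - 3 / 2 < ρ ^ 2 - ρ)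
    (h01 : 0 ≤ x1) (h02 : 0 ≤ x2) (h11 : x1 ≤ 1) (h12 : x2 ≤ 1)
    (e1 : ρ ^ 2 * x1 = ρ * (1 + x2) + a * (1 + x1))
    (e2 : ρ ^ 2 * x2 = ρ * (1 + x1) + b * (1 + x2))
    (e3 : ρ ^ 2 = ρ * (x1 + x2) + a * (1 + x1) + b * (1 + x2) + s) :
    s = 1 ∧ (a = 0 ∨ b = 0) := by
  have hρ2 : 10 * ρ < ρ ^ 2 := by nlinarith
  have hs : s % 2 = 1 := by
    obtain ⟨k, hk⟩ := hme
    omega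
  have hmr : (m : ℝ) = 3 + 2 * (a + b) + s := by rw [hm]; push_cast; ring
  have a0 : (0 : ℝ) ≤ a := by positivity
  have b0 : (0 : ℝ) ≤ b := by positivity
  have s1 : (1 : ℝ) ≤ s := by exact_mod_cast (by omega : 1 ≤ s)
  have g1 : (1 - x1) * (ρ ^ 2 + ρ) = b * (1 + x2) + s := by linear_combination e3 - e1
  have g2 : (1 - x2) * (ρ ^ 2 + ρ) = a * (1 + x1) + s := by linear_combination e3 - e2
  set T : ℝ := ρ ^ 2 + ρ with hT
  have hTpos : 0 < T := by positivity
  -- the exact defect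
  have g3 : ρ * ((m : ℝ) - ρ ^ 2 + ρ) = ρ * (1 + a * (1 - x1) + b * (1 - x2)) + s := by
    rw [hmr]
    linear_combination (1 - ρ) * e3 - e1 - e2
  have g4 : ((m : ℝ) - ρ ^ 2 + ρ - 1) * T
      = a * b * (2 + x1 + x2) + (a + b) * s + s * (ρ + 1) := by
    have : T = ρ * (ρ + 1) := by rw [hT]; ring
    have k : ((m : ℝ) - ρ ^ 2 + ρ - 1) * T
        = (a * (1 - x1) + b * (1 - x2)) * T + s * (ρ + 1) := by
      rw [this]; linear_combination (ρ + 1) * g3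
    rw [k]
    linear_combination (a : ℝ) * g1 + (b : ℝ) * g2
  have ab0 : 0 ≤ (a : ℝ) * b * (2 + x1 + x2) := by positivity
  have hlt : a * b * (2 + x1 + x2) + (a + b) * s + s * (ρ + 1) < T / 2 := by
    rw [← g4]
    have := mul_lt_mul_of_pos_right (show (m : ℝ) - ρ ^ 2 + ρ - 1 < 1 / 2 by linarith) hTpos
    linarith
  have hlow : ρ ^ 2 - ρ + 1 ≤ m := by
    have h : 0 ≤ ((m : ℝ) - ρ ^ 2 + ρ - 1) * T := by rw [g4]; positivity
    have := nonneg_of_mul_nonneg_left h hTpos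
    linarith
  have hs2 : s < ρ / 2 := by
    have h1 : (s : ℝ) * (ρ + 1) < ρ / 2 * (ρ + 1) := by
      have : (0 : ℝ) ≤ (a + b) * s := by positivity
      rw [hT] at hlt
      linarith
    exact lt_of_mul_lt_mul_right h1 (by linarith)
  have hs1 : s = 1 := by
    by_contra hne
    have s3 : (3 : ℝ) ≤ s := by exact_mod_cast (by omega : 3 ≤ s)
    have k1 : (a + b : ℝ) * 3 ≤ (a + b) * s := mul_le_mul_of_nonneg_left s3 (by positivity)
    have k2 : 3 * (ρ + 1) ≤ s * (ρ + 1) := mul_le_mul_of_nonneg_right s3 (by linarith)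
    rw [hT] at hlt
    linarith
  refine ⟨hs1, ?_⟩
  by_contra hne
  push Not at hne
  have a1 : (1 : ℝ) ≤ a := by exact_mod_cast Nat.pos_of_ne_zero hne.1
  have b1 : (1 : ℝ) ≤ b := by exact_mod_cast Nat.pos_of_ne_zero hne.2
  have k1 : (a : ℝ) + b - 1 ≤ a * b := by
    have := mul_nonneg (sub_nonneg.2 a1) (sub_nonneg.2 b1)
    linarith
  have k2 : (a : ℝ) * b * 2 ≤ a * b * (2 + x1 + x2) :=
    mul_le_mul_of_nonneg_left (by linarith) (by positivity)
  rw [hs1] at hlt hmr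
  push_cast at hlt hmr
  rw [hT] at hlt
  linarith

lemma iso_smin {V : Type} [Fintype V] (G : SimpleGraph V) (t : ℕ) (ht : 0 < t) (u c i : V)
    (hcard : Fintype.card V = t + 2) (hu : ∀ y, y ≠ u → G.Adj u y)
    (huc : u ≠ c) (hiu : i ≠ u) (hic : i ≠ c) (hci : ¬ G.Adj c i)
    (hc : ∀ y, y ≠ u → y ≠ c → y ≠ i → G.Adj c y)
    (hrest : ∀ y z, y ≠ u → y ≠ c → z ≠ u → z ≠ c → ¬ G.Adj y z) :
    Nonempty (G ≃g SminusG t) := by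
  classical
  have hcs : Fintype.card {y : V // y ∉ ({u, c} : Finset V)} = t := by
    rw [Fintype.card_subtype_compl, Fintype.card_coe, Finset.card_pair huc, hcard]
    omega
  let z : Fin t := ⟨0, ht⟩
  let e0 : {y : V // y ∉ ({u, c} : Finset V)} ≃ Fin t := Fintype.equivFinOfCardEq hcs
  let i' : {y : V // y ∉ ({u, c} : Finset V)} := ⟨i, by simp [hiu, hic]⟩
  let e : {y : V // y ∉ ({u, c} : Finset V)} ≃ Fin t := e0.trans (Equiv.swap (e0 i') z)
  have hei : e i' = z := by simp [e]
  have hes : (e.symm z).1 = i := by rw [← hei, Equiv.symm_apply_apply]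
  have hne : ∀ k, (e.symm k).1 ≠ u ∧ (e.symm k).1 ≠ c := fun k => by
    have := (e.symm k).2
    simpa using this
  let f : Fin 2 ⊕ Fin t → V := Sum.elim ![c, u] (fun k => (e.symm k).1)
  have hinj : Function.Injective f := by
    rintro (a | k) (b | l) h
    · fin_cases a <;> fin_cases b <;> simp [f, huc, huc.symm] at h ⊢
    · exfalso
      fin_cases a
      · exact (hne l).2 h.symm
      · exact (hne l).1 h.symm
    · exfalso
      fin_cases b
      · exact (hne k).2 h
      · exact (hne k).1 h
    · have : e.symm k = e.symm l := Subtype.ext h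
      rw [e.symm.injective this]
  have hbij : Function.Bijective f := by
    rw [Fintype.bijective_iff_injective_and_card]
    refine ⟨hinj, ?_⟩
    simp [hcard]
    omega
  have hk : ∀ k : Fin t, (k : ℕ) = 0 ↔ (e.symm k).1 = i := by
    intro k
    constructor
    · intro h
      have : k = z := Fin.ext h
      rw [this, hes]
    · intro h
      have h1 : e.symm k = i' := Subtype.ext h
      have h2 : k = z := by rw [← hei, ← h1, Equiv.apply_symm_apply]
      rw [h2]
  have hcu : G.Adj u c := hu c huc.symm
  have hlr : ∀ (a : Fin 2) (k : Fin t),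
      G.Adj (f (Sum.inl a)) (f (Sum.inr k)) ↔ ¬ (a = 0 ∧ (k : ℕ) = 0) := by
    intro a k
    fin_cases a
    · change G.Adj c (e.symm k).1 ↔ ¬ ((0 : Fin 2) = 0 ∧ (k : ℕ) = 0)
      rw [hk]
      constructor
      · rintro h ⟨_, h2⟩
        rw [h2] at h
        exact hci h
      · intro h
        exact hc _ (hne k).1 (hne k).2 fun h' => h ⟨rfl, h'⟩
    · change G.Adj u (e.symm k).1 ↔ ¬ ((1 : Fin 2) = 0 ∧ (k : ℕ) = 0)
      have := hu _ (hne k).1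
      simp [this]
  have hadj : ∀ a b, G.Adj (f a) (f b) ↔ (SminusG t).Adj a b := by
    rintro (a | k) (b | l)
    · rw [smin_adj_ll]
      fin_cases a <;> fin_cases b <;> simp [f, hcu, hcu.symm]
    · rw [smin_adj_lr, hlr]
    · rw [smin_adj_rl, G.adj_comm, hlr]
    · exact iff_of_false (hrest _ _ (hne k).1 (hne k).2 (hne l).1 (hne l).2) (smin_adj_rr t k l)
  exact ⟨(⟨Equiv.ofBijective f hbij, fun {a b} => hadj a b⟩ : SminusG t ≃g G).symm⟩

section Finish
variable {V : Type} [Fintype V] {G : SimpleGraph V} {u : V} {x : V → ℝ} {ρ : ℝ}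

lemma iso_final (t : ℕ) (ht : 0 < t) (hcard : Fintype.card V = t + 2) (hW : WW G u = ∅)
    {c1 c2 i : V} (hc : (LG G u).Adj c1 c2) (hi : i ∈ AA G u) (hi1 : i ≠ c1)
    (hi0 : dg (LG G u) i = 0)
    (hstr : ∀ y ∈ AA G u, y ≠ c1 → y ≠ c2 → y = i ∨ (dg (LG G u) y = 1 ∧ (LG G u).Adj y c1)) :
    Nonempty (G ≃g SminusG t) := by
  have hno : ∀ z, ¬ (LG G u).Adj i z := fun z h => by
    have := dg_pos _ h
    omega
  have hu : ∀ y, y ≠ u → G.Adj u y := by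
    intro y hy
    by_contra h
    have : y ∈ WW G u := (mem_WW G u).2 ⟨hy, h⟩
    rw [hW] at this
    simp at this
  have key : ∀ y z, (LG G u).Adj y z → y ≠ c1 → z ≠ c1 → y ≠ c2 → False := by
    intro y z h hy hz hy2
    rcases hstr y ((mem_AA G u).2 h.2.1) hy hy2 with rfl | ⟨h1, h2⟩
    · exact hno z h
    · exact hz (leaf_unique _ h1 h h2)
  refine iso_smin G t ht u c1 i hcard hu hc.2.1.ne ((mem_AA G u).1 hi).ne.symm hi1 ?_ ?_ ?_
  · intro h
    exact hno c1 ⟨h.symm, (mem_AA G u).1 hi, hc.2.1⟩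
  · intro y hyu hy1 hyi
    by_cases hy2 : y = c2
    · exact hy2 ▸ hc.1
    · rcases hstr y ((mem_AA G u).2 (hu y hyu)) hy1 hy2 with h | h
      · exact absurd h hyi
      · exact h.2.1.symm
  · intro y z hyu hy1 hzu hz1 h
    have hL : (LG G u).Adj y z := ⟨h, hu y hyu, hu z hzu⟩
    by_cases hy2 : y = c2
    · exact key z y hL.symm hz1 hy1 fun h' => h.ne (hy2.trans h'.symm)
    · exact key y z hL hy1 hz1 hy2

lemma Ctx.finish (C : Ctx G u x ρ) (hiso : ∀ v, ∃ y, G.Adj v y) (m : ℕ) (hme : Even m)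
    (hm : ∑ v, ∑ y, aM G v y = 2 * (m : ℝ)) (hm92 : 92 ≤ m)
    (hlow : (m : ℝ) - 3 / 2 < ρ ^ 2 - ρ) : Nonempty (G ≃g SminusG (m / 2)) := by
  classical
  obtain ⟨c1, c2, hc, hstr, hW⟩ := C.struct hiso
  set L := LG G u with hL
  have hc1 : c1 ∈ AA G u := (mem_AA G u).2 hc.2.1
  have hc2 : c2 ∈ AA G u := (mem_AA G u).2 hc.2.2
  have hne : c1 ≠ c2 := hc.ne
  set R := ((AA G u).erase c1).erase c2 with hR
  have memR : ∀ y, y ∈ R ↔ y ∈ AA G u ∧ y ≠ c1 ∧ y ≠ c2 := by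
    intro y
    rw [hR, Finset.mem_erase, Finset.mem_erase]
    tauto
  set R0 := R.filter (fun y => dg L y = 0) with hR0
  set R1 := R.filter (fun y => L.Adj y c1) with hR1
  set R2 := R.filter (fun y => L.Adj y c2) with hR2
  have dg1 : ∀ y ∈ R, ∀ z, L.Adj y z → dg L y = 1 := by
    intro y hy z hz
    obtain ⟨h1, h2, h3⟩ := (memR y).1 hy
    have := dg_pos _ hz
    rcases hstr y h1 h2 h3 with h | h
    · omega
    · exact h.1
  have no0 : ∀ y, dg L y = 0 → ∀ z, ¬ L.Adj y z := fun y hy z h => by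
    have := dg_pos _ h
    omega
  have dec : ∀ F : V → ℝ, ∑ y ∈ AA G u, F y
      = F c1 + F c2 + ∑ y ∈ R0, F y + ∑ y ∈ R1, F y + ∑ y ∈ R2, F y := by
    intro F
    rw [← Finset.add_sum_erase _ F hc1,
      ← Finset.add_sum_erase _ F (Finset.mem_erase.2 ⟨hne.symm, hc2⟩), ← hR]
    have : ∑ y ∈ R, F y = ∑ y ∈ R0, F y + ∑ y ∈ R1, F y + ∑ y ∈ R2, F y := by
      rw [hR0, hR1, hR2, Finset.sum_filter, Finset.sum_filter, Finset.sum_filter,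
        ← Finset.sum_add_distrib, ← Finset.sum_add_distrib]
      refine Finset.sum_congr rfl fun y hy => ?_
      obtain ⟨h1, h2, h3⟩ := (memR y).1 hy
      rcases hstr y h1 h2 h3 with h | ⟨h, h4 | h4⟩
      · rw [if_pos h, if_neg (no0 y h _), if_neg (no0 y h _)]
        ring
      · rw [if_neg (by omega), if_pos h4, if_neg fun h5 => hne (leaf_unique _ h h4 h5)]
        ring
      · rw [if_neg (by omega), if_pos h4, if_neg fun h5 => hne (leaf_unique _ h h5 h4)]
        ring
    rw [this]
    ring
  have adjL : ∀ y ∈ AA G u, ∀ z ∈ AA G u, G.Adj y z ↔ L.Adj y z := fun y hy z hz =>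
    ⟨fun h => ⟨h, (mem_AA G u).1 hy, (mem_AA G u).1 hz⟩, fun h => h.1⟩
  have inA : ∀ y ∈ R, y ∈ AA G u := fun y hy => ((memR y).1 hy).1
  have sR0 : ∀ y ∈ R0, ∀ F : V → ℝ, ∑ z ∈ AA G u, aM G y z * F z = 0 := by
    intro y hy F
    obtain ⟨h1, h2⟩ := Finset.mem_filter.1 hy
    refine Finset.sum_eq_zero fun z hz => ?_
    rw [aM_zero G fun h => no0 y h2 z ((adjL y (inA y h1) z hz).1 h), zero_mul]
  have sRc : ∀ c ∈ AA G u, ∀ y ∈ R, L.Adj y c → ∀ F : V → ℝ,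
      ∑ z ∈ AA G u, aM G y z * F z = F c := by
    intro c hcA y hy hyc F
    rw [Finset.sum_eq_single c]
    · rw [aM_one G hyc.1, one_mul]
    · intro z hz hzc
      rw [aM_zero G fun h => hzc
        (leaf_unique _ (dg1 y hy c hyc) ((adjL y (inA y hy) z hz).1 h) hyc), zero_mul]
    · exact fun h => absurd hcA h
  have z0 : ∀ c ∈ AA G u, ∀ F : V → ℝ, ∑ y ∈ R0, aM G c y * F y = 0 := by
    intro c hcA F
    refine Finset.sum_eq_zero fun y hy => ?_
    obtain ⟨h1, h2⟩ := Finset.mem_filter.1 hy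
    rw [aM_zero G fun h => no0 y h2 c ((adjL c hcA y (inA y h1)).1 h).symm, zero_mul]
  have sc1 : ∀ F : V → ℝ, ∑ z ∈ AA G u, aM G c1 z * F z = F c2 + ∑ y ∈ R1, F y := by
    intro F
    rw [dec, z0 c1 hc1, aM_self, aM_one G hc.1]
    have k1 : ∑ y ∈ R1, aM G c1 y * F y = ∑ y ∈ R1, F y :=
      Finset.sum_congr rfl fun y hy => by
        rw [aM_one G (Finset.mem_filter.1 hy).2.1.symm, one_mul]
    have k2 : ∑ y ∈ R2, aM G c1 y * F y = 0 := Finset.sum_eq_zero fun y hy => by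
      obtain ⟨h1, h2⟩ := Finset.mem_filter.1 hy
      rw [aM_zero G fun h => hne (leaf_unique _ (dg1 y h1 _ h2)
        ((adjL c1 hc1 y (inA y h1)).1 h).symm h2), zero_mul]
    rw [k1, k2]
    ring
  have sc2 : ∀ F : V → ℝ, ∑ z ∈ AA G u, aM G c2 z * F z = F c1 + ∑ y ∈ R2, F y := by
    intro F
    rw [dec, z0 c2 hc2, aM_self, aM_one G hc.1.symm]
    have k1 : ∑ y ∈ R2, aM G c2 y * F y = ∑ y ∈ R2, F y :=
      Finset.sum_congr rfl fun y hy => by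
        rw [aM_one G (Finset.mem_filter.1 hy).2.1.symm, one_mul]
    have k2 : ∑ y ∈ R1, aM G c2 y * F y = 0 := Finset.sum_eq_zero fun y hy => by
      obtain ⟨h1, h2⟩ := Finset.mem_filter.1 hy
      rw [aM_zero G fun h => hne (leaf_unique _ (dg1 y h1 _ h2)
        h2 ((adjL c2 hc2 y (inA y h1)).1 h).symm), zero_mul]
    rw [k1, k2]
    ring
  have eg : ∀ v ∈ AA G u, ρ * x v = 1 + ∑ y ∈ AA G u, aM G v y * x y := by
    intro v hv
    have := eig_A G u C.hu C.eig hv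
    rw [hW] at this
    simpa using this
  have q0 : ρ * ∑ y ∈ R0, x y = R0.card := by
    rw [Finset.mul_sum, Finset.card_eq_sum_ones, Nat.cast_sum]
    refine Finset.sum_congr rfl fun y hy => ?_
    rw [eg y (inA y (Finset.mem_filter.1 hy).1), sR0 y hy]
    simp
  have q1 : ρ * ∑ y ∈ R1, x y = R1.card * (1 + x c1) := by
    rw [Finset.mul_sum, ← nsmul_eq_mul, ← Finset.sum_const]
    refine Finset.sum_congr rfl fun y hy => ?_
    obtain ⟨h1, h2⟩ := Finset.mem_filter.1 hy
    rw [eg y (inA y h1), sRc c1 hc1 y h1 h2]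
  have q2 : ρ * ∑ y ∈ R2, x y = R2.card * (1 + x c2) := by
    rw [Finset.mul_sum, ← nsmul_eq_mul, ← Finset.sum_const]
    refine Finset.sum_congr rfl fun y hy => ?_
    obtain ⟨h1, h2⟩ := Finset.mem_filter.1 hy
    rw [eg y (inA y h1), sRc c2 hc2 y h1 h2]
  have p1 := eg c1 hc1
  rw [sc1] at p1
  have p2 := eg c2 hc2
  rw [sc2] at p2
  have p3 := eig_u G u C.hu C.eig
  rw [dec] at p3
  have cA : ((AA G u).card : ℝ) = 2 + R0.card + R1.card + R2.card := by
    have := dec (fun _ => 1)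
    simp only [Finset.sum_const, nsmul_eq_mul, mul_one] at this
    rw [this]
    ring
  have cA' : (AA G u).card = 2 + R0.card + R1.card + R2.card := by exact_mod_cast cA
  have dAe : ∀ v, dA G u v = ∑ z ∈ AA G u, aM G v z * 1 := fun v => by simp [dA]
  have ec := edge_count G u m hm
  rw [hW, dec] at ec
  have d0 : ∑ y ∈ R0, dA G u y = 0 := Finset.sum_eq_zero fun y hy => by
    rw [dAe, sR0 y hy (fun _ => 1)]
  have d1 : ∑ y ∈ R1, dA G u y = R1.card := by
    rw [Finset.card_eq_sum_ones, Nat.cast_sum]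
    refine Finset.sum_congr rfl fun y hy => ?_
    obtain ⟨h1, h2⟩ := Finset.mem_filter.1 hy
    rw [dAe, sRc c1 hc1 y h1 h2 (fun _ => 1)]
    simp
  have d2 : ∑ y ∈ R2, dA G u y = R2.card := by
    rw [Finset.card_eq_sum_ones, Nat.cast_sum]
    refine Finset.sum_congr rfl fun y hy => ?_
    obtain ⟨h1, h2⟩ := Finset.mem_filter.1 hy
    rw [dAe, sRc c2 hc2 y h1 h2 (fun _ => 1)]
    simp
  have t1 := sc1 (fun _ => 1)
  have t2 := sc2 (fun _ => 1)
  rw [← dAe] at t1 t2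
  simp only [Finset.sum_const, nsmul_eq_mul, mul_one] at t1 t2
  rw [d0, d1, d2, t1, t2, cA] at ec
  simp only [Finset.sum_empty] at ec
  have hmN : m = 3 + 2 * (R1.card + R2.card) + R0.card := by
    have : (m : ℝ) = 3 + 2 * (R1.card + R2.card) + R0.card := by linarith
    exact_mod_cast this
  obtain ⟨hs, hab⟩ := final_numeric R1.card R2.card R0.card m ρ (x c1) (x c2) hmN hme C.hρ hlow
    (C.h0 _) (C.h0 _) (C.h1 _) (C.h1 _)
    (by linear_combination ρ * p1 + q1) (by linear_combination ρ * p2 + q2)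
    (by linear_combination (-ρ) * p3 + q0 + q1 + q2)
  obtain ⟨i, hi⟩ := Finset.card_eq_one.1 hs
  have hiR : i ∈ R0 := by rw [hi]; simp
  obtain ⟨hiR', hi0⟩ := Finset.mem_filter.1 hiR
  obtain ⟨hiA, hi1, hi2⟩ := (memR i).1 hiR'
  have hcardV : Fintype.card V = 1 + (AA G u).card := by
    have := sum_split G u (fun _ => (1 : ℝ))
    rw [hW] at this
    simp only [Finset.sum_const, nsmul_eq_mul, mul_one, Finset.card_empty, Nat.cast_zero,
      add_zero, Finset.card_univ] at this
    exact_mod_cast this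
  have isi : ∀ y ∈ AA G u, y ≠ c1 → y ≠ c2 → dg L y = 0 → y = i := by
    intro y h1 h2 h3 h4
    have : y ∈ R0 := Finset.mem_filter.2 ⟨(memR y).2 ⟨h1, h2, h3⟩, h4⟩
    rw [hi] at this
    exact Finset.mem_singleton.1 this
  rcases hab with h | h
  · refine iso_final (m / 2) (by omega) (by omega) hW hc.symm hiA hi2 hi0 ?_
    intro y h1 h2 h3
    rcases hstr y h1 h3 h2 with h4 | ⟨h4, h5 | h5⟩
    · exact Or.inl (isi y h1 h3 h2 h4)
    · have : y ∈ R1 := Finset.mem_filter.2 ⟨(memR y).2 ⟨h1, h3, h2⟩, h5⟩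
      rw [Finset.card_eq_zero.1 h] at this
      simp at this
    · exact Or.inr ⟨h4, h5⟩
  · refine iso_final (m / 2) (by omega) (by omega) hW hc hiA hi1 hi0 ?_
    intro y h1 h2 h3
    rcases hstr y h1 h2 h3 with h4 | ⟨h4, h5 | h5⟩
    · exact Or.inl (isi y h1 h2 h3 h4)
    · exact Or.inr ⟨h4, h5⟩
    · have : y ∈ R2 := Finset.mem_filter.2 ⟨(memR y).2 ⟨h1, h2, h3⟩, h5⟩
      rw [Finset.card_eq_zero.1 h] at this
      simp at this

end Finish

lemma sum_aM {V : Type} [Fintype V] (G : SimpleGraph V) :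
    ∑ v, ∑ y, aM G v y = 2 * (G.edgeSet.ncard : ℝ) := by
  classical
  have h := G.sum_degrees_eq_twice_card_edges
  have h2 : G.edgeSet.ncard = G.edgeFinset.card := by
    rw [← SimpleGraph.coe_edgeFinset, Set.ncard_coe_finset]
  rw [h2]
  have h3 : ∀ v, ∑ y, aM G v y = (G.degree v : ℝ) := by
    intro v
    rw [← SimpleGraph.card_neighborFinset_eq_degree, SimpleGraph.neighborFinset_eq_filter,
      Finset.card_filter]
    push_cast
    exact Finset.sum_congr rfl fun y _ => by simp [aM]
  simp only [h3]
  exact_mod_cast h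

lemma iso_of_ge (m : ℕ) (hme : Even m) (hm : 92 ≤ m)
    {V : Type} [Fintype V] (G : SimpleGraph V)
    (hfree : ¬ ContainsSub theta133 G) (hmG : G.edgeSet.ncard = m)
    (hiso : ∀ v : V, (G.neighborSet v).ncard ≠ 0)
    (ρ ρ' : ℝ) (hρ : IsSpecRad G ρ) (hρ' : IsSpecRad (SminusG (m / 2)) ρ') (hge : ρ' ≤ ρ) :
    Nonempty (G ≃g SminusG (m / 2)) := by
  classical
  obtain ⟨b1, b2⟩ := smin_bound (m / 2) (by omega) ρ' hρ'
  have hm2 : (m : ℝ) = 2 * ((m / 2 : ℕ) : ℝ) := by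
    have : m = 2 * (m / 2) := by
      obtain ⟨k, hk⟩ := hme
      omega
    exact_mod_cast this
  have hm92 : (92 : ℝ) ≤ m := by exact_mod_cast hm
  have hlow : (m : ℝ) - 3 / 2 < ρ ^ 2 - ρ := by
    have : 0 ≤ (ρ - ρ') * (ρ + ρ' - 1) := mul_nonneg (by linarith) (by linarith)
    nlinarith
  have h10 : 10 < ρ := by
    by_contra h
    push Not at h
    have : 0 ≤ (10 - ρ) * (ρ + 9) := mul_nonneg (by linarith) (by linarith)
    nlinarith
  obtain ⟨x, u, h0, h1, hu, he⟩ := perron G ρ hρ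
  have eig : ∀ v, ∑ y, aM G v y * x y = ρ * x v := by
    intro v
    rw [← he v, Finset.sum_filter]
    refine Finset.sum_congr rfl fun y _ => ?_
    by_cases h : G.Adj v y
    · rw [aM_one G h, if_pos h, one_mul]
    · rw [aM_zero G h, if_neg h, zero_mul]
  have hsum : ∑ v, ∑ y, aM G v y = 2 * (m : ℝ) := by rw [sum_aM, hmG]
  have hD := D_ident G u hu eig m hsum
  rw [sum_f2] at hD
  have C : Ctx G u x ρ := ⟨h0, h1, hu, eig, hfree, h10, by linarith⟩
  refine C.finish (fun v => ?_) m hme hsum hm hlow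
  by_contra h
  push Not at h
  apply hiso v
  have : G.neighborSet v = ∅ := by
    ext y
    simp [h y]
  rw [this, Set.ncard_empty]

/-- main theorem: for even `m ≥ 92`, every `θ(1,3,3)`-free graph `G` with
`m` edges and no isolated vertices satisfies `ρ(G) ≤ ρ(S⁻_{(m+4)/2,2})`, with equality
iff `G ≅ S⁻_{(m+4)/2,2}`. -/
theorem main_theorem (m : ℕ) (hme : Even m) (hm : 92 ≤ m)
    {V : Type} [Fintype V] (G : SimpleGraph V)
    (hfree : ¬ ContainsSub theta133 G) (hmG : G.edgeSet.ncard = m)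
    (hiso : ∀ v : V, (G.neighborSet v).ncard ≠ 0)
    (ρ ρ' : ℝ) (hρ : IsSpecRad G ρ) (hρ' : IsSpecRad (SminusG (m / 2)) ρ') :
    ρ ≤ ρ' ∧ (ρ = ρ' ↔ Nonempty (G ≃g SminusG (m / 2))) := by
  have key := iso_of_ge m hme hm G hfree hmG hiso ρ ρ' hρ hρ'
  have eqv : Nonempty (G ≃g SminusG (m / 2)) → ρ = ρ' := fun ⟨e⟩ =>
    le_antisymm (specRad_iso _ _ e ρ ρ' hρ hρ') (specRad_iso _ _ e.symm ρ' ρ hρ' hρ)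
  refine ⟨?_, fun h => key h.ge, eqv⟩
  rcases le_total ρ ρ' with h | h
  · exact h
  · exact (eqv (key h)).le
end
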